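/- arXiv:2605.08026 — 5 statements merged into one kernel-verified Lean document; each statement's English description precedes it below -/
import Mathlib

section
/- Let x̄ be a local minimizer of (P) and let d ∈ C(x̄) ∩ 𝕊 be such that MSCQ(d) holds at x̄. Then x̄ is M-stationary in direction d. -/
open Filter Topology Metric Set
open scoped RealInnerProductSpace Pointwise

noncomputable section

/-- Euclidean space `ℝ^n`. -/
abbrev Eu (n : ℕ) := EuclideanSpace ℝ (Fin n)

section Cones

variable {H : Type*} [NormedAddCommGroup H] [InnerProductSpace ℝ H]

/-- Tangent (Bouligand) cone to `Ω` at `x` (empty if `x ∉ Ω`). -/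
def tanCone (Ω : Set H) (x : H) : Set H :=
  {d | x ∈ Ω ∧ ∃ (dk : ℕ → H) (tk : ℕ → ℝ),
    Tendsto dk atTop (𝓝 d) ∧ (∀ k, 0 < tk k) ∧ Tendsto tk atTop (𝓝 0) ∧
    ∀ k, x + tk k • dk k ∈ Ω}

/-- Polar cone of a set. -/
def polarCone (C : Set H) : Set H := {y | ∀ x ∈ C, ⟪x, y⟫ ≤ 0}

/-- Regular (Fréchet) normal cone: polar of the tangent cone (empty if `x ∉ Ω`). -/
def regNormal (Ω : Set H) (x : H) : Set H :=
  {η | x ∈ Ω ∧ η ∈ polarCone (tanCone Ω x)}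

/-- Limiting (Mordukhovich) normal cone (empty if `x ∉ Ω`). -/
def limNormal (Ω : Set H) (x : H) : Set H :=
  {η | x ∈ Ω ∧ ∃ (xk ηk : ℕ → H),
    Tendsto xk atTop (𝓝 x) ∧ Tendsto ηk atTop (𝓝 η) ∧
    ∀ k, ηk k ∈ regNormal Ω (xk k)}

/-- Directional limiting normal cone to `Ω` at `x` in direction `d`. -/
def dirLimNormal (Ω : Set H) (x d : H) : Set H :=
  {η | x ∈ Ω ∧ ∃ (dk : ℕ → H) (tk : ℕ → ℝ) (ηk : ℕ → H),
    Tendsto dk atTop (𝓝 d) ∧ (∀ k, 0 < tk k) ∧ Tendsto tk atTop (𝓝 0) ∧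
    Tendsto ηk atTop (𝓝 η) ∧
    ∀ k, ηk k ∈ regNormal Ω (x + tk k • dk k)}

/-- The pair `(ξ, r)` as an element of the ℓ²-product `H ×₂ ℝ`. -/
def pl2 (ξ : H) (r : ℝ) : WithLp 2 (H × ℝ) := (WithLp.equiv 2 (H × ℝ)).symm (ξ, r)

/-- Epigraph of `φ` as a subset of the ℓ²-product `H ×₂ ℝ`. -/
def epigraphSet (φ : H → ℝ) : Set (WithLp 2 (H × ℝ)) :=
  {p | φ ((WithLp.equiv 2 (H × ℝ)) p).1 ≤ ((WithLp.equiv 2 (H × ℝ)) p).2}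

/-- Limiting subdifferential of `φ` at `x`. -/
def limSubdiff (φ : H → ℝ) (x : H) : Set H :=
  {ξ | pl2 ξ (-1) ∈ limNormal (epigraphSet φ) (pl2 x (φ x))}

/-- Directional limiting subdifferential of `φ` at `x` in direction `d`, where `φd`
denotes the directional derivative `φ'(x; d)`. -/
def dirLimSubdiff (φ : H → ℝ) (x d : H) (φd : ℝ) : Set H :=
  {ξ | pl2 ξ (-1) ∈ dirLimNormal (epigraphSet φ) (pl2 x (φ x)) (pl2 d φd)}

/-- Directional neighborhood `B_{ε,δ}(d)`. -/
def dirNbhd (d : H) (ε δ : ℝ) : Set H :=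
  {y | ‖y‖ ≤ ε ∧ ‖‖d‖ • y - ‖y‖ • d‖ ≤ δ * (‖y‖ * ‖d‖)}

end Cones

section Problem

variable {n l : ℕ}

/-- `F' x d` is the directional derivative of `F` at `x` in direction `d`. -/
def IsDirDeriv (F : Eu n → Eu l) (F' : Eu n → Eu n → Eu l) : Prop :=
  ∀ x d : Eu n,
    Tendsto (fun t : ℝ => t⁻¹ • (F (x + t • d) - F x)) (𝓝[>] (0:ℝ)) (𝓝 (F' x d))

/-- Limiting subdifferential of the scalarization `⟨λ, F⟩` at `x`. -/
def scalSubdiff (F : Eu n → Eu l) (lam : Eu l) (x : Eu n) : Set (Eu n) :=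
  limSubdiff (fun y => ⟪lam, F y⟫) x

/-- Directional limiting subdifferential of `⟨λ, F⟩` at `x` in direction `d`. -/
def scalDirSubdiff (F : Eu n → Eu l) (F' : Eu n → Eu n → Eu l) (lam : Eu l)
    (x d : Eu n) : Set (Eu n) :=
  dirLimSubdiff (fun y => ⟪lam, F y⟫) x d ⟪lam, F' x d⟫

/-- Linearization cone. -/
def linCone (F : Eu n → Eu l) (F' : Eu n → Eu n → Eu l) (Γ : Set (Eu l)) (x : Eu n) :
    Set (Eu n) :=
  {d | F' x d ∈ tanCone Γ (F x)}

/-- Explicit critical cone `C(x̄)`. -/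
def critCone (f : Eu n → ℝ) (F : Eu n → Eu l) (F' : Eu n → Eu n → Eu l)
    (Γ : Set (Eu l)) (x : Eu n) : Set (Eu n) :=
  {d | ⟪gradient f x, d⟫ ≤ 0 ∧ d ∈ linCone F F' Γ x}

/-- Implicit critical cone `Ĉ(x̄)`. -/
def implCritCone (f : Eu n → ℝ) (F : Eu n → Eu l) (Γ : Set (Eu l)) (x : Eu n) :
    Set (Eu n) :=
  {d | ⟪gradient f x, d⟫ ≤ 0 ∧ d ∈ tanCone (F ⁻¹' Γ) x}

/-- M-stationarity. -/
def MStat (f : Eu n → ℝ) (F : Eu n → Eu l) (Γ : Set (Eu l)) (x : Eu n) : Prop :=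
  ∃ lam : Eu l, -gradient f x ∈ scalSubdiff F lam x ∧ lam ∈ limNormal Γ (F x)

/-- M-stationarity in direction `d`. -/
def MStatDir (f : Eu n → ℝ) (F : Eu n → Eu l) (F' : Eu n → Eu n → Eu l)
    (Γ : Set (Eu l)) (x d : Eu n) : Prop :=
  ∃ lam : Eu l, -gradient f x ∈ scalDirSubdiff F F' lam x d ∧
    lam ∈ dirLimNormal Γ (F x) (F' x d)

/-- Metric subregularity constraint qualification in direction `d`. -/
def MSCQdir (F : Eu n → Eu l) (Γ : Set (Eu l)) (x d : Eu n) : Prop :=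
  ∃ ε > (0:ℝ), ∃ δ > (0:ℝ), ∃ κ > (0:ℝ), ∀ y : Eu n, y - x ∈ dirNbhd d ε δ →
    infDist y (F ⁻¹' Γ) ≤ κ * infDist (F y) Γ

/-- Metric subregularity constraint qualification. -/
def MSCQ (F : Eu n → Eu l) (Γ : Set (Eu l)) (x : Eu n) : Prop := MSCQdir F Γ x 0

/-- AM-stationary sequence w.r.t. `x`. -/
def AMSeq (f : Eu n → ℝ) (F : Eu n → Eu l) (Γ : Set (Eu l)) (x : Eu n)
    (xk : ℕ → Eu n) (lamk δk : ℕ → Eu l) (εk : ℕ → Eu n) : Prop :=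
  (∀ k, εk k - gradient f (xk k) ∈ scalSubdiff F (lamk k) (xk k)) ∧
  (∀ k, lamk k ∈ limNormal Γ (F (xk k) - δk k)) ∧
  Tendsto xk atTop (𝓝 x) ∧ Tendsto δk atTop (𝓝 0) ∧ Tendsto εk atTop (𝓝 0)

/-- AM-stationarity. -/
def AMStat (f : Eu n → ℝ) (F : Eu n → Eu l) (Γ : Set (Eu l)) (x : Eu n) : Prop :=
  ∃ xk lamk δk εk, AMSeq f F Γ x xk lamk δk εk

/-- AM-stationary sequence w.r.t. `x` in direction `d`. -/
def AMSeqDir (f : Eu n → ℝ) (F : Eu n → Eu l) (Γ : Set (Eu l)) (x : Eu n)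
    (xk : ℕ → Eu n) (lamk δk : ℕ → Eu l) (εk : ℕ → Eu n) (d : Eu n) : Prop :=
  AMSeq f F Γ x xk lamk δk εk ∧
  (∀ k, xk k ≠ x) ∧
  Tendsto (fun k => ‖xk k - x‖⁻¹ • (xk k - x)) atTop (𝓝 d) ∧
  Tendsto (fun k => ‖xk k - x‖⁻¹ • δk k) atTop (𝓝 (0 : Eu l)) ∧
  (∃ θ : ℕ → ℝ, (∀ k, 0 ≤ θ k) ∧ Tendsto θ atTop (𝓝 0) ∧
    ∀ k, ‖‖δk k‖ • lamk k - ‖lamk k‖ • δk k‖ ≤ ‖δk k‖ * ‖lamk k‖ * θ k) ∧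
  (∃ M : ℝ, ∀ k, ‖δk k‖ * ‖lamk k‖ / ‖xk k - x‖ ≤ M)

/-- AM-stationarity in direction `d`. -/
def AMStatDir (f : Eu n → ℝ) (F : Eu n → Eu l) (Γ : Set (Eu l)) (x d : Eu n) : Prop :=
  ∃ xk lamk δk εk, AMSeqDir f F Γ x xk lamk δk εk d

/-- The Minkowski sum `Σ_i |λ_i| ∂(sgn(λ_i) F_i)(x; d)`. -/
def dirSumSet (F : Eu n → Eu l) (F' : Eu n → Eu n → Eu l) (lam : Eu l) (x d : Eu n) :
    Set (Eu n) :=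
  {v | ∃ s : Fin l → Eu n,
    (∀ i, s i ∈ |lam i| • dirLimSubdiff (fun y => Real.sign (lam i) * F y i) x d
        (Real.sign (lam i) * F' x d i)) ∧
    v = ∑ i, s i}

/-- Standing sum-rule assumption. -/
def SumRule (F : Eu n → Eu l) (F' : Eu n → Eu n → Eu l) : Prop :=
  ∀ (x d : Eu n) (lam : Eu l), scalDirSubdiff F F' lam x d = dirSumSet F F' lam x d

end Problem

section Helpers

variable {n l : ℕ}

lemma aux_dirDeriv_seq {F : Eu n → Eu l} {F' : Eu n → Eu n → Eu l}
    (hLip : LocallyLipschitz F) (hF' : IsDirDeriv F F') (x d : Eu n)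
    (tk : ℕ → ℝ) (dk : ℕ → Eu n) (htp : ∀ k, 0 < tk k) (ht : Tendsto tk atTop (𝓝 0))
    (hdk : Tendsto dk atTop (𝓝 d)) :
    Tendsto (fun k => (tk k)⁻¹ • (F (x + tk k • dk k) - F x)) atTop (𝓝 (F' x d)) := by
  obtain ⟨K, U, hU, hK⟩ := hLip x
  have h1 : Tendsto (fun k => (tk k)⁻¹ • (F (x + tk k • d) - F x)) atTop (𝓝 (F' x d)) := by
    refine (hF' x d).comp ?_
    exact tendsto_nhdsWithin_iff.2 ⟨ht, Eventually.of_forall htp⟩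
  have hA : Tendsto (fun k => x + tk k • dk k) atTop (𝓝 x) := by
    simpa using (tendsto_const_nhds (x := x)).add (ht.smul hdk)
  have hB : Tendsto (fun k => x + tk k • d) atTop (𝓝 x) := by
    simpa using (tendsto_const_nhds (x := x)).add (ht.smul (tendsto_const_nhds (x := d)))
  have h2 : Tendsto (fun k => (tk k)⁻¹ • (F (x + tk k • dk k) - F (x + tk k • d))) atTop
      (𝓝 0) := by
    have h3 : Tendsto (fun k => (K : ℝ) * ‖dk k - d‖) atTop (𝓝 0) := by
      have : Tendsto (fun k => ‖dk k - d‖) atTop (𝓝 0) := by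
        simpa using (hdk.sub_const d).norm
      simpa using this.const_mul (K : ℝ)
    refine squeeze_zero_norm' ?_ h3
    filter_upwards [hA.eventually hU, hB.eventually hU] with k ha hb
    have h4 := hK.norm_sub_le ha hb
    have h5 : x + tk k • dk k - (x + tk k • d) = tk k • (dk k - d) := by
      rw [smul_sub]; abel
    rw [h5, norm_smul, Real.norm_of_nonneg (htp k).le] at h4
    rw [norm_smul, Real.norm_of_nonneg (inv_pos.2 (htp k)).le, inv_mul_le_iff₀ (htp k)]
    linarith
  have h6 := h1.add h2
  rw [add_zero] at h6
  refine h6.congr fun k => ?_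
  rw [← smul_add]
  congr 1
  abel

lemma aux_prox {Γ : Set (Eu l)} {w z : Eu l} (hz : z ∈ Γ)
    (h : ∀ z' ∈ Γ, ‖w - z‖ ≤ ‖w - z'‖) {c : ℝ} (hc : 0 ≤ c) :
    c • (w - z) ∈ regNormal Γ z := by
  refine ⟨hz, ?_⟩
  rintro v ⟨-, dk, tk, hdk, htp, ht, hmem⟩
  rw [inner_smul_right]
  have h1 : ∀ k, 2 * ⟪dk k, w - z⟫ ≤ tk k * ‖dk k‖ ^ 2 := by
    intro k
    have h2 := h _ (hmem k)
    have h3 : ‖w - z‖ ^ 2 ≤ ‖w - (z + tk k • dk k)‖ ^ 2 := by gcongr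
    rw [← sub_sub, norm_sub_sq_real (w - z), inner_smul_right, norm_smul,
      Real.norm_of_nonneg (htp k).le, real_inner_comm] at h3
    have h4 : tk k * (2 * ⟪dk k, w - z⟫) ≤ tk k * (tk k * ‖dk k‖ ^ 2) := by
      nlinarith
    exact le_of_mul_le_mul_left h4 (htp k)
  have h5 : Tendsto (fun k => 2 * ⟪dk k, w - z⟫) atTop (𝓝 (2 * ⟪v, w - z⟫)) :=
    (hdk.inner tendsto_const_nhds).const_mul 2
  have h6 : Tendsto (fun k => tk k * ‖dk k‖ ^ 2) atTop (𝓝 (0 * ‖v‖ ^ 2)) :=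
    ht.mul (hdk.norm.pow 2)
  have h7 := le_of_tendsto_of_tendsto' h5 h6 h1
  have : ⟪v, w - z⟫ ≤ 0 := by linarith
  exact mul_nonpos_of_nonneg_of_nonpos hc this

lemma aux_reg {φ : Eu n → ℝ} {ξ y0 y' : Eu n} {c : ℝ}
    (h : ∀ᶠ y in 𝓝 y', φ y' - ⟪ξ, y'⟫ + c * ‖y' - y0‖ ^ 2 ≤ φ y - ⟪ξ, y⟫ + c * ‖y - y0‖ ^ 2) :
    pl2 (ξ - (2 * c) • (y' - y0)) (-1) ∈ regNormal (epigraphSet φ) (pl2 y' (φ y')) := by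
  refine ⟨?_, ?_⟩
  · simp [epigraphSet, pl2]
  rintro v ⟨-, dk, tk, hdk, htp, ht, hmem⟩
  have hd1 : Tendsto (fun k => (dk k).ofLp.1) atTop (𝓝 v.ofLp.1) :=
    ((WithLp.prod_continuous_ofLp 2 (Eu n) ℝ).fst.tendsto v).comp hdk
  have hd2 : Tendsto (fun k => (dk k).ofLp.2) atTop (𝓝 v.ofLp.2) :=
    ((WithLp.prod_continuous_ofLp 2 (Eu n) ℝ).snd.tendsto v).comp hdk
  have hA : Tendsto (fun k => y' + tk k • (dk k).ofLp.1) atTop (𝓝 y') := by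
    simpa using (tendsto_const_nhds (x := y')).add (ht.smul hd1)
  have key : ∀ᶠ k in atTop, ⟪(dk k).ofLp.1, ξ⟫ - c * (2 * ⟪(dk k).ofLp.1, y' - y0⟫
      + tk k * ‖(dk k).ofLp.1‖ ^ 2) ≤ (dk k).ofLp.2 := by
    filter_upwards [hA.eventually h] with k hk
    have h2 : φ (y' + tk k • (dk k).ofLp.1) ≤ φ y' + tk k * (dk k).ofLp.2 := by
      simpa [epigraphSet, pl2] using hmem k
    have h3 : y' + tk k • (dk k).ofLp.1 - y0 = (y' - y0) + tk k • (dk k).ofLp.1 := by abel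
    rw [h3, norm_add_sq_real, inner_smul_right, norm_smul, Real.norm_of_nonneg (htp k).le,
      inner_add_right, inner_smul_right] at hk
    rw [real_inner_comm ξ, real_inner_comm (y' - y0)]
    refine le_of_mul_le_mul_left ?_ (htp k)
    nlinarith
  have hl : Tendsto (fun k => ⟪(dk k).ofLp.1, ξ⟫ - c * (2 * ⟪(dk k).ofLp.1, y' - y0⟫
      + tk k * ‖(dk k).ofLp.1‖ ^ 2)) atTop (𝓝 (⟪v.ofLp.1, ξ⟫ - c * (2 * ⟪v.ofLp.1, y' - y0⟫
      + 0 * ‖v.ofLp.1‖ ^ 2))) :=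
    (hd1.inner tendsto_const_nhds).sub
      ((((hd1.inner tendsto_const_nhds).const_mul 2).add (ht.mul (hd1.norm.pow 2))).const_mul c)
  have h9 := le_of_tendsto_of_tendsto hl hd2 key
  rw [WithLp.prod_inner_apply]
  simp only [pl2, WithLp.equiv_symm_apply, inner_sub_right, inner_smul_right] at h9 ⊢
  have h10 : ⟪v.ofLp.2, (-1 : ℝ)⟫ = - v.ofLp.2 := by simp
  rw [h10]
  linarith

lemma aux_fuzzy {φ : Eu n → ℝ} (hφ : Continuous φ) {ξ y0 : Eu n} {ε : ℝ} (hε : 0 < ε)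
    (h : ∀ᶠ y in 𝓝 y0, ⟪ξ, y - y0⟫ - ε * ‖y - y0‖ ≤ φ y - φ y0) {τ : ℝ} (hτ : 0 < τ) :
    ∃ y' ξ' : Eu n, ‖y' - y0‖ ≤ τ ∧ ‖ξ' - ξ‖ ≤ 4 * ε ∧
      pl2 ξ' (-1) ∈ regNormal (epigraphSet φ) (pl2 y' (φ y')) := by
  obtain ⟨r, hr, hr2⟩ := Metric.eventually_nhds_iff_ball.1 h
  set s := min τ (r / 2) with hs
  have hs0 : 0 < s := lt_min hτ (by linarith)
  have hsr : s < r := (min_le_right _ _).trans_lt (by linarith)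
  obtain ⟨y', hy', hm⟩ := (isCompact_closedBall y0 s).exists_isMinOn ⟨y0, by simp [hs0.le]⟩
    (f := fun y => φ y - ⟪ξ, y⟫ + (2 * ε / s) * ‖y - y0‖ ^ 2) (by fun_prop)
  have hy1 : ‖y' - y0‖ ≤ s := by simpa [dist_eq_norm] using hy'
  have h1 := hm (show y0 ∈ closedBall y0 s by simp [hs0.le])
  have h2 := hr2 y' (by rw [mem_ball, dist_eq_norm]; linarith)
  simp only [mem_ofPred_eq, sub_self, norm_zero] at h1
  rw [inner_sub_right] at h2
  have hsm : ‖y' - y0‖ ≤ s / 2 := by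
    by_contra! hcon
    have h3 : (2 * ε / s) * ‖y' - y0‖ ^ 2 ≤ ε * ‖y' - y0‖ := by linarith
    have h4 : 0 < ‖y' - y0‖ := by linarith
    rw [div_mul_eq_mul_div, div_le_iff₀ hs0] at h3
    have h5 : 0 < ε * ‖y' - y0‖ := by positivity
    nlinarith
  refine ⟨y', ξ - (2 * (2 * ε / s)) • (y' - y0), hy1.trans (min_le_left _ _), ?_, ?_⟩
  · rw [sub_sub_cancel_left, norm_neg, norm_smul, Real.norm_of_nonneg (by positivity)]
    calc 2 * (2 * ε / s) * ‖y' - y0‖ ≤ 2 * (2 * ε / s) * (s / 2) := by gcongr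
      _ = 2 * ε := by field_simp
      _ ≤ 4 * ε := by linarith
  · apply aux_reg
    have : closedBall y0 s ∈ 𝓝 y' := by
      refine mem_of_superset (isOpen_ball.mem_nhds ?_) ball_subset_closedBall
      rw [mem_ball, dist_eq_norm]; linarith
    filter_upwards [this] with y hy using hm hy

lemma aux_sub {f : Eu n → ℝ} (hf : ContDiff ℝ 1 f) {F : Eu n → Eu l} {K : NNReal}
    {U : Set (Eu n)} {y0 p : Eu n} (hU : U ∈ 𝓝 y0) (hK : LipschitzOnWith K F U)
    {z : Eu l} {C ρ t N : ℝ} (hC : 0 ≤ C) (hρ : 0 < ρ)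
    (hN : N = √(‖F y0 - z‖ ^ 2 + ρ ^ 2))
    (hmin : ∀ᶠ y in 𝓝 y0, f y0 + C * √(‖F y0 - z‖ ^ 2 + ρ ^ 2) + t⁻¹ * ‖y0 - p‖ ^ 2 ≤
      f y + C * √(‖F y - z‖ ^ 2 + ρ ^ 2) + t⁻¹ * ‖y - p‖ ^ 2) {ε : ℝ} (hε : 0 < ε) :
    ∀ᶠ y in 𝓝 y0, ⟪-gradient f y0 - (2 * t⁻¹) • (y0 - p), y - y0⟫ - ε * ‖y - y0‖ ≤
      ⟪(C / N) • (F y0 - z), F y - F y0⟫ := by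
  have hg := (hasGradientAt_iff_isLittleO.1
    ((hf.differentiable one_ne_zero).differentiableAt (x := y0)).hasGradientAt).def
    (half_pos hε)
  have hN0 : 0 < N := by rw [hN]; positivity
  set M := C * K ^ 2 / (2 * N) + |t⁻¹| with hM
  have hM0 : 0 ≤ M := by positivity
  have hsmall : ∀ᶠ y in 𝓝 y0, M * ‖y - y0‖ ≤ ε / 2 := by
    have : Tendsto (fun y => M * ‖y - y0‖) (𝓝 y0) (𝓝 (M * ‖y0 - y0‖)) :=
      Continuous.tendsto (by fun_prop) y0
    rw [sub_self, norm_zero, mul_zero] at this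
    exact this.eventually (ge_mem_nhds (half_pos hε))
  filter_upwards [hg, hsmall, hmin, hU] with y h1 h2 h3 hy
  have hL := hK.norm_sub_le hy (mem_of_mem_nhds hU)
  have hsq : √(‖F y - z‖ ^ 2 + ρ ^ 2) ≤ N + (⟪F y0 - z, F y - F y0⟫ / N
      + ‖F y - F y0‖ ^ 2 / (2 * N)) := by
    have e1 : ‖F y - z‖ ^ 2 = ‖F y0 - z‖ ^ 2 + 2 * ⟪F y0 - z, F y - F y0⟫
        + ‖F y - F y0‖ ^ 2 := by
      rw [← norm_add_sq_real]; congr 2; abel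
    have e2 : N ^ 2 = ‖F y0 - z‖ ^ 2 + ρ ^ 2 := by
      rw [hN, Real.sq_sqrt]; positivity
    set S := √(‖F y - z‖ ^ 2 + ρ ^ 2) with hS
    have e3 : S ^ 2 = ‖F y - z‖ ^ 2 + ρ ^ 2 := by
      rw [hS, Real.sq_sqrt]; positivity
    have e4 : N + (⟪F y0 - z, F y - F y0⟫ / N + ‖F y - F y0‖ ^ 2 / (2 * N))
        = (N ^ 2 + S ^ 2) / (2 * N) := by
      rw [e3, e1, eq_div_iff (by positivity)]
      field_simp
      linarith
    rw [e4, le_div_iff₀ (by positivity)]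
    nlinarith [sq_nonneg (S - N)]
  have hq : t⁻¹ * ‖y - p‖ ^ 2 = t⁻¹ * ‖y0 - p‖ ^ 2 + 2 * t⁻¹ * ⟪y0 - p, y - y0⟫
      + t⁻¹ * ‖y - y0‖ ^ 2 := by
    have : y - p = (y0 - p) + (y - y0) := by abel
    rw [this, norm_add_sq_real]; ring
  have hq2 : t⁻¹ * ‖y - y0‖ ^ 2 ≤ |t⁻¹| * ‖y - y0‖ ^ 2 := by gcongr; exact le_abs_self _
  have hL2 : ‖F y - F y0‖ ^ 2 ≤ K ^ 2 * ‖y - y0‖ ^ 2 := by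
    rw [← mul_pow]; gcongr
  have hL3 : C * (‖F y - F y0‖ ^ 2 / (2 * N)) ≤ C * K ^ 2 / (2 * N) * ‖y - y0‖ ^ 2 := by
    calc C * (‖F y - F y0‖ ^ 2 / (2 * N)) ≤ C * (K ^ 2 * ‖y - y0‖ ^ 2 / (2 * N)) := by gcongr
      _ = _ := by ring
  have hC2 := mul_le_mul_of_nonneg_left hsq hC
  have h4 : M * ‖y - y0‖ * ‖y - y0‖ ≤ ε / 2 * ‖y - y0‖ := by gcongr
  have h5 := (abs_le.1 (Real.norm_eq_abs _ ▸ h1)).2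
  rw [← hN] at h3
  rw [inner_sub_left, inner_neg_left, real_inner_smul_left, real_inner_smul_left]
  have h6 : C / N * ⟪F y0 - z, F y - F y0⟫ = C * (⟪F y0 - z, F y - F y0⟫ / N) := by ring
  rw [h6]
  have h7 : M * ‖y - y0‖ * ‖y - y0‖ = C * K ^ 2 / (2 * N) * ‖y - y0‖ ^ 2
     + |t⁻¹| * ‖y - y0‖ ^ 2 := by rw [hM]; ring
  linarith

lemma aux_lower {f : Eu n → ℝ} (hf : ContDiff ℝ 1 f) {F : Eu n → Eu l} (hF : Continuous F)
    {Γ : Set (Eu l)} (hΓcl : IsClosed Γ) {x d : Eu n} (hfeas : F x ∈ Γ)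
    (hmin : IsLocalMinOn f (F ⁻¹' Γ) x) (hM : MSCQdir F Γ x d) (hd1 : ‖d‖ = 1) :
    ∃ C > 0, ∃ r > 0, ∀ t : ℝ, 0 < t → t < r → ∀ y, ‖y - (x + t • d)‖ ≤ r * t →
      f x ≤ f y + C * infDist (F y) Γ := by
  obtain ⟨ε, hε, δ, hδ, κ, hκ, hM⟩ := hM
  obtain ⟨L, U, hU, hL⟩ := hf.locallyLipschitz x
  have hmin' : ∀ᶠ y in 𝓝 x, y ∈ F ⁻¹' Γ → f x ≤ f y := eventually_nhdsWithin_iff.1 hmin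
  obtain ⟨η, hη, hball⟩ := Metric.eventually_nhds_iff_ball.1 (hmin'.and hU)
  have hL1 : (0 : ℝ) < L + 1 := by positivity
  refine ⟨(L + 1) * κ, by positivity, min (1 / 2) (min (δ / 4) (min (ε / 2) (η / 4))),
    by positivity, ?_⟩
  intro t ht htr y hy
  set r := min (1 / 2) (min (δ / 4) (min (ε / 2) (η / 4))) with hr
  have hr1 : r ≤ 1 / 2 := min_le_left _ _
  have hr2 : r ≤ δ / 4 := (min_le_right _ _).trans (min_le_left _ _)
  have hr3 : r ≤ ε / 2 := (min_le_right _ _).trans ((min_le_right _ _).trans (min_le_left _ _))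
  have hr4 : r ≤ η / 4 := (min_le_right _ _).trans ((min_le_right _ _).trans (min_le_right _ _))
  have htd : ‖t • d‖ = t := by rw [norm_smul, hd1, Real.norm_of_nonneg ht.le, mul_one]
  have e0 : y - x - t • d = y - (x + t • d) := by abel
  have hu : ‖y - x‖ ≤ t + r * t := by
    have := norm_add_le (y - x - t • d) (t • d)
    rw [sub_add_cancel, e0, htd] at this
    linarith
  have hl : t - r * t ≤ ‖y - x‖ := by
    have := norm_sub_norm_le (t • d) (y - x)
    rw [norm_sub_rev (t • d), e0, htd] at this
    linarith
  have hrt : r * t ≤ 1 / 2 * t := by gcongr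
  have hrt2 : r * t ≤ δ / 4 * t := by gcongr
  have hdir : y - x ∈ dirNbhd d ε δ := by
    refine ⟨by linarith, ?_⟩
    rw [hd1, one_smul, mul_one]
    have e1 : y - x - ‖y - x‖ • d = (y - (x + t • d)) + (t - ‖y - x‖) • d := by
      rw [sub_smul]; abel
    have e2 : ‖(t - ‖y - x‖) • d‖ ≤ r * t := by
      rw [norm_smul, hd1, mul_one, Real.norm_eq_abs, abs_le]
      constructor <;> linarith
    rw [e1]
    have e3 := norm_add_le (y - (x + t • d)) ((t - ‖y - x‖) • d)
    have e4 : δ * (t / 2) ≤ δ * ‖y - x‖ := by gcongr; linarith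
    linarith
  have hI := hM y hdir
  obtain ⟨q, hq, hqd⟩ := (hΓcl.preimage hF).exists_infDist_eq_dist ⟨x, hfeas⟩ y
  have hqx : dist y q ≤ dist y x := hqd ▸ infDist_le_dist_of_mem (s := F ⁻¹' Γ) hfeas
  rw [dist_eq_norm y x] at hqx
  have hqb : q ∈ ball x η := by
    rw [mem_ball]
    have := dist_triangle_left q x y
    rw [dist_eq_norm y x] at this
    linarith
  have hyb : y ∈ ball x η := by
    rw [mem_ball, dist_eq_norm]
    linarith
  have h1 := (hball q hqb).1 hq
  have h2 := hL.norm_sub_le (hball q hqb).2 (hball y hyb).2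
  have h3 := (abs_le.1 (Real.norm_eq_abs _ ▸ h2)).2
  rw [← dist_eq_norm, dist_comm, ← hqd] at h3
  have h4 : (L + 1) * infDist y (F ⁻¹' Γ) ≤ (L + 1) * (κ * infDist (F y) Γ) := by gcongr
  have h5 : 0 ≤ infDist y (F ⁻¹' Γ) := infDist_nonneg
  linarith

lemma aux_step1 {f : Eu n → ℝ} (hf : ContDiff ℝ 1 f)
    {F : Eu n → Eu l} {F' : Eu n → Eu n → Eu l}
    (hLip : LocallyLipschitz F) (hF' : IsDirDeriv F F')
    {Γ : Set (Eu l)} (hΓne : Γ.Nonempty) (hΓcl : IsClosed Γ)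
    {x : Eu n} (hfeas : F x ∈ Γ) (hmin : IsLocalMinOn f (F ⁻¹' Γ) x)
    {d : Eu n} (hd : d ∈ critCone f F F' Γ x) (hd1 : ‖d‖ = 1)
    (hMSCQ : MSCQdir F Γ x d) :
    ∃ C K : ℝ, ∀ η > 0, ∃ t : ℝ, 0 < t ∧ t < η ∧ ∃ (y ξ : Eu n) (u lam : Eu l),
      ‖t⁻¹ • (y - x) - d‖ < η ∧ ‖u - F' x d‖ < η ∧ lam ∈ regNormal Γ (F x + t • u) ∧
      ‖lam‖ ≤ C ∧ ‖ξ - -gradient f x‖ < η ∧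
      ∀ lam' : Eu l, ∀ᶠ y' in 𝓝 y, ⟪ξ, y' - y⟫ - (η + K * ‖lam' - lam‖) * ‖y' - y‖ ≤
        ⟪lam', F y'⟫ - ⟪lam', F y⟫ := by
  obtain ⟨C, hC, r, hr, hlow⟩ := aux_lower hf hLip.continuous hΓcl hfeas hmin hMSCQ hd1
  obtain ⟨K, U, hU, hK⟩ := hLip x
  obtain ⟨hgd, -, uk, tk, huk, htp, ht, hmem⟩ := hd
  have hFc := hLip.continuous
  have hfc := hf.continuous
  have hgc : Continuous (gradient f) := by
    unfold gradient
    exact (InnerProductSpace.toDual ℝ (Eu n)).symm.continuous.comp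
      (hf.continuous_fderiv one_ne_zero)
  set p : ℕ → Eu n := fun k => x + tk k • d with hp
  have hex : ∀ k, ∃ y ∈ closedBall (p k) (r * tk k),
      IsMinOn (fun y => f y + C * √(infDist (F y) Γ ^ 2 + (tk k ^ 2) ^ 2)
        + (tk k)⁻¹ * ‖y - p k‖ ^ 2) (closedBall (p k) (r * tk k)) y := by
    intro k
    refine (isCompact_closedBall _ _).exists_isMinOn
      ⟨p k, mem_closedBall_self (mul_pos hr (htp k)).le⟩ (Continuous.continuousOn ?_)
    have : Continuous fun y => infDist (F y) Γ := (continuous_infDist_pt Γ).comp hFc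
    fun_prop
  choose y hyb hym using hex
  have hyb' : ∀ k, ‖y k - p k‖ ≤ r * tk k := fun k => by
    simpa [dist_eq_norm] using hyb k
  have hpx : Tendsto p atTop (𝓝 x) := by
    simpa using (tendsto_const_nhds (x := x)).add (ht.smul (tendsto_const_nhds (x := d)))
  -- quotient at the centers
  have hq0 := aux_dirDeriv_seq hLip hF' x d tk (fun _ => d) htp ht tendsto_const_nhds
  have hdist : ∀ (v : ℕ → Eu n),
      Tendsto (fun k => (tk k)⁻¹ • (F (v k) - F x)) atTop (𝓝 (F' x d)) →
      ∀ θ > 0, ∀ᶠ k in atTop, ‖F (v k) - (F x + tk k • uk k)‖ ≤ θ * tk k := by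
    intro v hv θ hθ
    have h1 := (hv.sub huk).norm
    rw [sub_self, norm_zero] at h1
    filter_upwards [h1.eventually (ge_mem_nhds hθ)] with k hk
    have e1 : F (v k) - (F x + tk k • uk k) =
        tk k • ((tk k)⁻¹ • (F (v k) - F x) - uk k) := by
      rw [smul_sub, smul_inv_smul₀ (htp k).ne']; abel
    rw [e1, norm_smul, Real.norm_of_nonneg (htp k).le, mul_comm]
    exact mul_le_mul_of_nonneg_right hk (htp k).le
  have hclose : ∀ θ > 0, ∀ᶠ k in atTop, ‖y k - p k‖ ≤ θ * tk k := by
    intro θ hθ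
    have hθ2 : 0 < θ ^ 2 / 4 := by positivity
    have hg := (hasGradientAt_iff_isLittleO.1
      ((hf.differentiable one_ne_zero).differentiableAt (x := x)).hasGradientAt).def hθ2
    have hθC : 0 < θ ^ 2 / 4 / C := by positivity
    filter_upwards [hpx.eventually hg, hdist p hq0 _ hθC, ht.eventually (ge_mem_nhds hθC),
      ht.eventually (gt_mem_nhds hr)] with k h1 h2 h3 h4
    have htk := htp k
    have a1 := (abs_le.1 (Real.norm_eq_abs _ ▸ h1)).2
    have e1 : p k - x = tk k • d := by simp [hp]
    rw [e1, inner_smul_right, norm_smul, hd1, Real.norm_of_nonneg htk.le, mul_one] at a1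
    have a2 : tk k * ⟪gradient f x, d⟫ ≤ 0 := mul_nonpos_of_nonneg_of_nonpos htk.le hgd
    have a3 : infDist (F (p k)) Γ ≤ θ ^ 2 / 4 / C * tk k :=
      (infDist_le_dist_of_mem (hmem k)).trans (by rw [dist_eq_norm]; exact h2)
    have a4 : √(infDist (F (p k)) Γ ^ 2 + (tk k ^ 2) ^ 2) ≤ infDist (F (p k)) Γ + tk k ^ 2 := by
      have : 0 ≤ infDist (F (p k)) Γ := infDist_nonneg
      apply Real.sqrt_le_iff.2
      constructor
      · positivity
      · nlinarith [mul_nonneg this (sq_nonneg (tk k))]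
    have a5 : tk k ^ 2 ≤ θ ^ 2 / 4 / C * tk k := by nlinarith
    have a6 : C * √(infDist (F (p k)) Γ ^ 2 + (tk k ^ 2) ^ 2) ≤ θ ^ 2 / 2 * tk k := by
      calc _ ≤ C * (θ ^ 2 / 4 / C * tk k + θ ^ 2 / 4 / C * tk k) := by gcongr; linarith
        _ = _ := by field_simp; ring
    have b1 := hym k (mem_closedBall_self (mul_pos hr htk).le)
    simp only [mem_ofPred_eq, sub_self, norm_zero] at b1
    have b2 := hlow (tk k) htk h4 (y k) (hyb' k)
    have b3 : C * infDist (F (y k)) Γ ≤ C * √(infDist (F (y k)) Γ ^ 2 + (tk k ^ 2) ^ 2) := by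
      gcongr
      apply Real.le_sqrt_of_sq_le
      nlinarith [sq_nonneg (tk k ^ 2)]
    have b4 : (tk k)⁻¹ * ‖y k - p k‖ ^ 2 ≤ θ ^ 2 * tk k := by nlinarith
    rw [inv_mul_le_iff₀ htk] at b4
    refine abs_le_of_sq_le_sq' (a := ‖y k - p k‖) (b := θ * tk k) ?_ (by positivity) |>.2
    nlinarith
  set dk : ℕ → Eu n := fun k => (tk k)⁻¹ • (y k - x) with hdkdef
  have hdkd : ∀ k, dk k - d = (tk k)⁻¹ • (y k - p k) := by
    intro k
    have : y k - p k = (y k - x) - tk k • d := by simp only [hp]; abel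
    rw [this, smul_sub, inv_smul_smul₀ (htp k).ne']
  have hyk : ∀ k, x + tk k • dk k = y k := by
    intro k
    simp only [hdkdef]
    rw [smul_inv_smul₀ (htp k).ne']; abel
  have hdk : Tendsto dk atTop (𝓝 d) := by
    rw [Metric.tendsto_nhds]
    intro θ hθ
    filter_upwards [hclose (θ / 2) (half_pos hθ)] with k hk
    rw [dist_eq_norm, hdkd, norm_smul, Real.norm_of_nonneg (inv_pos.2 (htp k)).le]
    have : (tk k)⁻¹ * ‖y k - p k‖ ≤ θ / 2 := by
      rw [inv_mul_le_iff₀ (htp k)]; linarith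
    linarith
  have hyx : Tendsto y atTop (𝓝 x) := by
    have : Tendsto (fun k => x + tk k • dk k) atTop (𝓝 x) := by
      simpa using (tendsto_const_nhds (x := x)).add (ht.smul hdk)
    exact this.congr hyk
  have hq1 : Tendsto (fun k => (tk k)⁻¹ • (F (y k) - F x)) atTop (𝓝 (F' x d)) :=
    (aux_dirDeriv_seq hLip hF' x d tk dk htp ht hdk).congr fun k => by rw [hyk]
  have hz : ∀ k, ∃ z ∈ Γ, infDist (F (y k)) Γ = dist (F (y k)) z := fun k =>
    hΓcl.exists_infDist_eq_dist hΓne _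
  choose z hzΓ hzd using hz
  have hzmin : ∀ k, ∀ z' ∈ Γ, ‖F (y k) - z k‖ ≤ ‖F (y k) - z'‖ := fun k z' hz' => by
    rw [← dist_eq_norm, ← dist_eq_norm, ← hzd]
    exact infDist_le_dist_of_mem hz'
  have hξ : Tendsto (fun k => -gradient f (y k) - (2 * (tk k)⁻¹) • (y k - p k)) atTop
      (𝓝 (-gradient f x)) := by
    have h1 : Tendsto (fun k => -gradient f (y k) - (2 : ℝ) • (dk k - d)) atTop
        (𝓝 (-gradient f x - (2 : ℝ) • (d - d))) :=
      ((hgc.tendsto x).comp hyx).neg.sub ((hdk.sub_const d).const_smul (2 : ℝ))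
    rw [sub_self, smul_zero, sub_zero] at h1
    refine h1.congr fun k => ?_
    rw [hdkd, smul_smul]
  refine ⟨C, K, fun η hη => ?_⟩
  have hUy : ∀ᶠ k in atTop, U ∈ 𝓝 (y k) := hyx.eventually (eventually_mem_nhds_iff.2 hU)
  have hev := (ht.eventually (gt_mem_nhds hη)).and ((hdk.eventually (ball_mem_nhds d hη)).and
    ((hξ.eventually (ball_mem_nhds _ hη)).and (hUy.and ((hclose (r / 2) (half_pos hr)).and
    ((hdist y hq1 (η / 3) (by positivity)).and
      (hq1.eventually (ball_mem_nhds _ (half_pos hη))))))))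
  obtain ⟨k, h1, h2, h3, h4, h5, h6, h7⟩ := hev.exists
  have htk := htp k
  change dist _ _ < _ at h2
  change dist _ _ < _ at h3
  change dist _ _ < _ at h7
  rw [dist_eq_norm] at h2 h3 h7
  have hρ : 0 < tk k ^ 2 := by positivity
  set N := √(‖F (y k) - z k‖ ^ 2 + (tk k ^ 2) ^ 2) with hN
  have hN0 : 0 < N := by positivity
  have hlocmin : ∀ᶠ y' in 𝓝 (y k), f (y k) + C * √(‖F (y k) - z k‖ ^ 2 + (tk k ^ 2) ^ 2)
      + (tk k)⁻¹ * ‖y k - p k‖ ^ 2 ≤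
      f y' + C * √(‖F y' - z k‖ ^ 2 + (tk k ^ 2) ^ 2) + (tk k)⁻¹ * ‖y' - p k‖ ^ 2 := by
    have hnb : closedBall (p k) (r * tk k) ∈ 𝓝 (y k) := by
      refine mem_of_superset (isOpen_ball.mem_nhds ?_) ball_subset_closedBall
      rw [mem_ball, dist_eq_norm]
      have := mul_pos hr htk
      linarith
    filter_upwards [hnb] with y' hy'
    have := hym k hy'
    simp only [mem_ofPred_eq] at this
    rw [hzd, dist_eq_norm] at this
    refine this.trans ?_
    have h0 : 0 ≤ infDist (F y') Γ := infDist_nonneg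
    have h8 : infDist (F y') Γ ≤ ‖F y' - z k‖ := by
      rw [← dist_eq_norm]; exact infDist_le_dist_of_mem (hzΓ k)
    gcongr
  have hsub := aux_sub hf h4 hK hC.le hρ hN hlocmin hη
  refine ⟨tk k, htk, h1, y k, -gradient f (y k) - (2 * (tk k)⁻¹) • (y k - p k),
    (tk k)⁻¹ • (z k - F x), (C / N) • (F (y k) - z k), h2, ?_, ?_, ?_, h3, ?_⟩
  · have e1 : (tk k)⁻¹ • (z k - F x) - F' x d =
        ((tk k)⁻¹ • (F (y k) - F x) - F' x d) - (tk k)⁻¹ • (F (y k) - z k) := by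
      simp only [smul_sub]; abel
    have e2 : ‖(tk k)⁻¹ • (F (y k) - z k)‖ ≤ η / 3 := by
      rw [norm_smul, Real.norm_of_nonneg (inv_pos.2 htk).le, inv_mul_le_iff₀ htk]
      have := hzmin k _ (hmem k)
      linarith
    rw [e1]
    have := norm_sub_le ((tk k)⁻¹ • (F (y k) - F x) - F' x d) ((tk k)⁻¹ • (F (y k) - z k))
    linarith
  · rw [smul_inv_smul₀ htk.ne', add_sub_cancel]
    exact aux_prox (hzΓ k) (hzmin k) (by positivity)
  · rw [norm_smul, Real.norm_of_nonneg (by positivity), div_mul_eq_mul_div,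
      div_le_iff₀ hN0]
    gcongr
    apply Real.le_sqrt_of_sq_le
    nlinarith [sq_nonneg (tk k ^ 2)]
  · intro lam'
    filter_upwards [hsub, h4] with y' hy1 hy2
    have hL := hK.norm_sub_le hy2 (mem_of_mem_nhds h4)
    set lam := (C / N) • (F (y k) - z k)
    have e1 : ⟪lam', F y'⟫ - ⟪lam', F (y k)⟫ =
        ⟪lam, F y' - F (y k)⟫ + ⟪lam' - lam, F y' - F (y k)⟫ := by
      rw [← inner_add_left, add_sub_cancel, inner_sub_right]
    have e2 := (abs_le.1 (abs_real_inner_le_norm (lam' - lam) (F y' - F (y k)))).1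
    have e3 : ‖lam' - lam‖ * ‖F y' - F (y k)‖ ≤ ‖lam' - lam‖ * (K * ‖y' - y k‖) := by gcongr
    rw [e1]
    linarith

end Helpers

/-- A local minimizer is M-stationary in a critical unit direction `d`
provided MSCQ(d) holds there. -/
theorem stmt8 {n l : ℕ}
    (f : Eu n → ℝ) (hf : ContDiff ℝ 1 f)
    (F : Eu n → Eu l) (F' : Eu n → Eu n → Eu l)
    (hLip : LocallyLipschitz F) (hF' : IsDirDeriv F F')
    (Γ : Set (Eu l)) (hΓne : Γ.Nonempty) (hΓcl : IsClosed Γ)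
    (x : Eu n) (hfeas : F x ∈ Γ) (hmin : IsLocalMinOn f (F ⁻¹' Γ) x)
    (d : Eu n) (hd : d ∈ critCone f F F' Γ x) (hd1 : ‖d‖ = 1)
    (hMSCQ : MSCQdir F Γ x d) :
    MStatDir f F F' Γ x d := by
  obtain ⟨C, K, hstep⟩ := aux_step1 hf hLip hF' hΓne hΓcl hfeas hmin hd hd1 hMSCQ
  set e : ℕ → ℝ := fun k => 1 / ((k : ℝ) + 1) with he
  have hepos : ∀ k, 0 < e k := fun k => by positivity
  have he0 : Tendsto e atTop (𝓝 0) := tendsto_one_div_add_atTop_nhds_zero_nat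
  choose t htp hte y ξ u lam hy hu hlam hlamC hξ hsub using fun k => hstep (e k) (hepos k)
  obtain ⟨L, -, φ, hφ, hL⟩ := tendsto_subseq_of_bounded
    (isBounded_closedBall (x := (0 : Eu l)) (r := C)) (x := lam)
    (fun k => by simpa using hlamC k)
  have heφ : Tendsto (e ∘ φ) atTop (𝓝 0) := he0.comp hφ.tendsto_atTop
  have ht0 : Tendsto (t ∘ φ) atTop (𝓝 0) :=
    squeeze_zero (fun k => (htp _).le) (fun k => (hte _).le) heφ
  have hlim : ∀ {E : Type} [NormedAddCommGroup E] (v : ℕ → E) (a : E),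
      (∀ k, ‖v k - a‖ < e k) → Tendsto (v ∘ φ) atTop (𝓝 a) := by
    intro E _ v a hv
    rw [tendsto_iff_norm_sub_tendsto_zero]
    exact squeeze_zero (fun k => norm_nonneg _) (fun k => (hv _).le) heφ
  have huF := hlim u _ hu
  have hξg := hlim ξ _ hξ
  have hyd := hlim (fun k => (t k)⁻¹ • (y k - x)) d hy
  refine ⟨L, ?_, hfeas, u ∘ φ, t ∘ φ, lam ∘ φ, huF, fun k => htp _, ht0, hL, fun k => hlam _⟩
  -- the subdifferential inclusion
  set ε : ℕ → ℝ := fun k => e (φ k) + |K| * ‖L - lam (φ k)‖ with hε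
  have hεpos : ∀ k, 0 < ε k := fun k => by
    have := hepos (φ k)
    positivity
  have hε0 : Tendsto ε atTop (𝓝 0) := by
    have h1 : Tendsto (fun k => ‖L - lam (φ k)‖) atTop (𝓝 ‖L - L‖) :=
      (tendsto_const_nhds.sub hL).norm
    rw [sub_self, norm_zero] at h1
    have h2 := heφ.add (h1.const_mul |K|)
    simpa using h2
  have hφc : Continuous fun y => ⟪L, F y⟫ := continuous_const.inner hLip.continuous
  have hfz : ∀ k, ∃ y' ξ' : Eu n, ‖y' - y (φ k)‖ ≤ e (φ k) * t (φ k) ∧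
      ‖ξ' - ξ (φ k)‖ ≤ 4 * ε k ∧ pl2 ξ' (-1) ∈
      regNormal (epigraphSet fun y => ⟪L, F y⟫) (pl2 y' ((fun y => ⟪L, F y⟫) y')) := by
    intro k
    refine aux_fuzzy hφc (hεpos k) ?_ (mul_pos (hepos _) (htp _))
    filter_upwards [hsub (φ k) L] with y' hy'
    refine le_trans ?_ hy'
    have h1 : K * ‖L - lam (φ k)‖ ≤ |K| * ‖L - lam (φ k)‖ := by
      gcongr; exact le_abs_self K
    simp only [hε]
    gcongr
  choose y' ξ' hy' hξ' hreg using hfz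
  set dk : ℕ → Eu n := fun k => (t (φ k))⁻¹ • (y' k - x) with hdk
  have hyk : ∀ k, x + t (φ k) • dk k = y' k := by
    intro k
    simp only [hdk]
    rw [smul_inv_smul₀ (htp _).ne']; abel
  have hdkd : Tendsto dk atTop (𝓝 d) := by
    have h1 : Tendsto (fun k => (t (φ k))⁻¹ • (y' k - y (φ k))) atTop (𝓝 0) := by
      refine squeeze_zero_norm (fun k => ?_) heφ
      rw [norm_smul, Real.norm_of_nonneg (inv_pos.2 (htp _)).le, inv_mul_le_iff₀ (htp _)]
      simpa [mul_comm] using hy' k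
    have h2 := hyd.add h1
    rw [add_zero] at h2
    refine h2.congr fun k => ?_
    simp only [Function.comp, hdk]
    rw [← smul_add]; congr 1; abel
  have hq := aux_dirDeriv_seq hLip hF' x d (t ∘ φ) dk (fun k => htp _) ht0 hdkd
  have hq2 : Tendsto (fun k => (t (φ k))⁻¹ * (⟪L, F (y' k)⟫ - ⟪L, F x⟫)) atTop
      (𝓝 ⟪L, F' x d⟫) := by
    have := (tendsto_const_nhds (x := L)).inner hq (𝕜 := ℝ)
    refine this.congr fun k => ?_
    simp only [Function.comp]
    rw [hyk, inner_smul_right, inner_sub_right]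
  have hξ0 : Tendsto ξ' atTop (𝓝 (-gradient f x)) := by
    have h1 : Tendsto (fun k => ξ' k - ξ (φ k)) atTop (𝓝 0) := by
      refine squeeze_zero_norm hξ' ?_
      simpa using hε0.const_mul 4
    have h2 := hξg.add h1
    rw [add_zero] at h2
    refine h2.congr fun k => ?_
    simp
  have hpl : ∀ (a : ℕ → Eu n) (b : ℕ → ℝ) (a0 : Eu n) (b0 : ℝ), Tendsto a atTop (𝓝 a0) →
      Tendsto b atTop (𝓝 b0) → Tendsto (fun k => pl2 (a k) (b k)) atTop (𝓝 (pl2 a0 b0)) := by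
    intro a b a0 b0 ha hb
    exact ((WithLp.prod_continuous_toLp 2 (Eu n) ℝ).tendsto (a0, b0)).comp (ha.prodMk_nhds hb)
  refine ⟨by simp [epigraphSet, pl2], fun k => pl2 (dk k)
    ((t (φ k))⁻¹ * (⟪L, F (y' k)⟫ - ⟪L, F x⟫)), t ∘ φ, fun k => pl2 (ξ' k) (-1),
    hpl _ _ _ _ hdkd hq2, fun k => htp _, ht0, hpl _ _ _ _ hξ0 tendsto_const_nhds, fun k => ?_⟩
  have e1 : pl2 x ⟪L, F x⟫ + (t ∘ φ) k • pl2 (dk k)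
      ((t (φ k))⁻¹ * (⟪L, F (y' k)⟫ - ⟪L, F x⟫)) = pl2 (y' k) ⟪L, F (y' k)⟫ := by
    have h1 : ⟪L, F x⟫ + t (φ k) * ((t (φ k))⁻¹ * (⟪L, F (y' k)⟫ - ⟪L, F x⟫))
        = ⟪L, F (y' k)⟫ := by
      rw [mul_inv_cancel_left₀ (htp _).ne']; ring
    exact Eq.trans (b := pl2 (x + t (φ k) • dk k)
      (⟪L, F x⟫ + t (φ k) * ((t (φ k))⁻¹ * (⟪L, F (y' k)⟫ - ⟪L, F x⟫)))) rfl
      (by rw [h1, hyk])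
  rw [e1]
  exact hreg k

end
end

section
/- Let x̄ be a local minimizer of (P) such that F is continuously differentiable on a neighborhood of x̄, let GGCQ hold at x̄, and fix d ∈ C(x̄) ∩ 𝕊. Assume that Γ is convex locally around F(x̄), i.e., there is a neighborhood V of F(x̄) such that Γ ∩ V is convex, and that the set-valued mapping u ↦ {F'(x̄)u} − T_Γ(F(x̄)) from ℝ^n to ℝ^ℓ is metrically subregular in direction d at (0, 0). Then x̄ is M-stationary in direction d. -/
open Filter Topology Metric Set
open scoped RealInnerProductSpace Pointwise

noncomputable section

/-- Sequential directional limits for differentiable maps. -/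
lemma aux_lim {E G : Type*} [NormedAddCommGroup E] [NormedSpace ℝ E]
    [NormedAddCommGroup G] [NormedSpace ℝ G] {g : E → G} {g' : E →L[ℝ] G} {z : E}
    (hg : HasFDerivAt g g' z) {w : ℕ → E} {t : ℕ → ℝ} {v : E}
    (hw : Tendsto w atTop (𝓝 v)) (ht : ∀ k, 0 < t k) (ht0 : Tendsto t atTop (𝓝 0)) :
    Tendsto (fun k => (t k)⁻¹ • (g (z + t k • w k) - g z)) atTop (𝓝 (g' v)) := by
  have h0 : Tendsto (fun k => t k • w k) atTop (𝓝 0) := by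
    simpa using ht0.smul hw
  have := (hasFDerivWithinAt_univ.2 hg).lim (α := ℕ) (l := atTop) (c := fun k => (t k)⁻¹)
    (d := fun k => t k • w k) (v := v) h0 (.of_forall fun _ => mem_univ _) ?_
  · exact this
  · refine hw.congr fun k => ?_
    rw [smul_smul, inv_mul_cancel₀ (ht k).ne', one_smul]

lemma aux_tan_smul {H : Type*} [NormedAddCommGroup H] [InnerProductSpace ℝ H]
    {Γ : Set H} {y v : H} (hv : v ∈ tanCone Γ y) {s : ℝ} (hs : 0 < s) :
    s • v ∈ tanCone Γ y := by
  obtain ⟨hy, dk, tk, h1, h2, h3, h4⟩ := hv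
  refine ⟨hy, fun k => s • dk k, fun k => tk k / s, h1.const_smul s, fun k => div_pos (h2 k) hs,
    by simpa using h3.div_const s, fun k => ?_⟩
  rw [smul_smul, div_mul_cancel₀ _ hs.ne']
  exact h4 k

lemma aux_tan_zero {H : Type*} [NormedAddCommGroup H] [InnerProductSpace ℝ H]
    {Γ : Set H} {y : H} (hy : y ∈ Γ) : (0 : H) ∈ tanCone Γ y :=
  ⟨hy, fun _ => 0, fun k => 1 / ((k : ℝ) + 1), tendsto_const_nhds, fun k => by positivity,
    tendsto_one_div_add_atTop_nhds_zero_nat, fun k => by simpa using hy⟩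

lemma aux_tan_add {H : Type*} [NormedAddCommGroup H] [InnerProductSpace ℝ H]
    {Γ : Set H} {y v w : H} {r : ℝ} (hr : 0 < r) (hC : Convex ℝ (Γ ∩ closedBall y r))
    (hv : v ∈ tanCone Γ y) (hw : w ∈ tanCone Γ y) :
    v + w ∈ tanCone Γ y := by
  obtain ⟨hy, dk, tk, h1, h2, h3, h4⟩ := hv
  obtain ⟨-, ek, sk, g1, g2, g3, g4⟩ := hw
  have hyC : y ∈ Γ ∩ closedBall y r := ⟨hy, mem_closedBall_self hr.le⟩
  have key : ∀ (dk : ℕ → H) (tk : ℕ → ℝ) (v : H), Tendsto dk atTop (𝓝 v) →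
      Tendsto tk atTop (𝓝 0) → ∀ᶠ k in atTop, y + tk k • dk k ∈ closedBall y r := by
    intro dk tk v h1 h3
    have : Tendsto (fun k => y + tk k • dk k) atTop (𝓝 y) := by
      simpa using (h3.smul h1).const_add y
    exact this (closedBall_mem_nhds y hr)
  have down : ∀ (u : H) (a b : ℝ), 0 < b → b ≤ a → y + a • u ∈ Γ ∩ closedBall y r →
      y + b • u ∈ Γ ∩ closedBall y r := by
    intro u a b hb hba h
    have ha : 0 < a := hb.trans_le hba
    have := hC hyC h (a := 1 - b / a) (b := b / a)
      (by rw [sub_nonneg, div_le_one ha]; exact hba) (by positivity) (by ring)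
    convert this using 1
    rw [smul_add, smul_smul, div_mul_cancel₀ _ ha.ne', ← add_assoc, ← add_smul]
    simp
  obtain ⟨N, hN⟩ := eventually_atTop.1 ((key dk tk v h1 h3).and (key ek sk w g1 g3))
  refine ⟨hy, fun k => dk (k + N) + ek (k + N), fun k => min (tk (k + N)) (sk (k + N)) / 2,
    (((tendsto_add_atTop_iff_nat N).2 h1).add ((tendsto_add_atTop_iff_nat N).2 g1)),
    fun k => half_pos (lt_min (h2 _) (g2 _)), ?_, fun k => ?_⟩
  · have := (((tendsto_add_atTop_iff_nat N).2 h3).min ((tendsto_add_atTop_iff_nat N).2 g3)).div_const 2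
    simpa using this
  · obtain ⟨b1, b2⟩ := hN (k + N) (by omega)
    have hm : 0 < min (tk (k + N)) (sk (k + N)) := lt_min (h2 _) (g2 _)
    have c1 := down _ _ _ hm (min_le_left _ _) ⟨h4 (k + N), b1⟩
    have c2 := down _ _ _ hm (min_le_right _ _) ⟨g4 (k + N), b2⟩
    have := hC c1 c2 (a := 1 / 2) (b := 1 / 2) (by norm_num) (by norm_num) (by norm_num)
    convert this.1 using 1
    module

/-- Normals to the tangent cone are directional limiting normals for locally convex sets. -/
lemma aux_dirLim {H : Type*} [NormedAddCommGroup H] [InnerProductSpace ℝ H] [CompleteSpace H]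
    {Γ : Set H} (hcl : IsClosed Γ) {y v lam : H} {r : ℝ} (hr : 0 < r)
    (hC : Convex ℝ (Γ ∩ closedBall y r)) (hv : v ∈ tanCone Γ y)
    (hlam : lam ∈ polarCone (tanCone Γ y)) (horth : ⟪v, lam⟫ = 0) :
    lam ∈ dirLimNormal Γ y v := by
  obtain ⟨hy, vk, tk, h1, h2, h3, h4⟩ := hv
  set C := Γ ∩ closedBall y r with hCdef
  have hyC : y ∈ C := ⟨hy, mem_closedBall_self hr.le⟩
  have hCcl : IsClosed C := hcl.inter isClosed_closedBall
  -- elements of C give tangents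
  have htan : ∀ q ∈ C, ∀ c ∈ C, c - q ∈ tanCone Γ q := by
    intro q hq c hc
    refine ⟨hq.1, fun _ => c - q, fun k => 1 / ((k : ℝ) + 1), tendsto_const_nhds,
      fun k => by positivity, tendsto_one_div_add_atTop_nhds_zero_nat, fun k => ?_⟩
    have h0 : (0 : ℝ) ≤ 1 / ((k : ℝ) + 1) := by positivity
    have h1 : 1 / ((k : ℝ) + 1) ≤ 1 := by
      rw [div_le_one (by positivity)]; linarith [(Nat.cast_nonneg k : (0:ℝ) ≤ k)]
    have := hC hq hc (a := 1 - 1 / ((k : ℝ) + 1)) (b := 1 / ((k : ℝ) + 1)) (by linarith) h0 (by ring)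
    convert this.1 using 1
    module
  have hproj : ∀ z : H, ∃ p ∈ C, ∀ c ∈ C, ⟪z - p, c - p⟫ ≤ 0 := by
    intro z
    obtain ⟨p, hp, hpe⟩ := exists_norm_eq_iInf_of_complete_convex ⟨y, hyC⟩ hCcl.isComplete hC z
    exact ⟨p, hp, (norm_eq_iInf_iff_real_inner_le_zero hC hp).1 hpe⟩
  choose P hPC hP using hproj
  set z : ℕ → H := fun k => y + tk k • vk k with hz
  set p : ℕ → H := fun k => P (z k + tk k • lam) with hp
  set e : ℕ → H := fun k => (tk k)⁻¹ • (z k - p k) with he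
  have hzt : Tendsto z atTop (𝓝 y) := by
    simpa using (h3.smul h1).const_add y
  have hzC : ∀ᶠ k in atTop, z k ∈ C := by
    filter_upwards [hzt (closedBall_mem_nhds y hr)] with k hk
    exact ⟨h4 k, hk⟩
  have heb : ∀ᶠ k in atTop, ‖e k‖ ≤ Real.sqrt (-⟪vk k, lam⟫) := by
    filter_upwards [hzC] with k hk
    apply Real.le_sqrt_of_sq_le
    have a1 := hP (z k + tk k • lam) (z k) hk
    have a2 : ⟪p k - y, lam⟫ ≤ 0 := hlam _ (htan y hyC _ (hPC _))
    have hzp : z k - p k = tk k • e k := by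
      simp only [he, smul_smul, mul_inv_cancel₀ (h2 k).ne', one_smul]
    have a3 : ⟪z k - p k + tk k • lam, z k - p k⟫ ≤ 0 := by
      convert a1 using 2
      simp only [hp]; abel
    have a4 : p k - y = tk k • vk k - tk k • e k := by
      rw [← hzp]; simp only [hz]; abel
    rw [a4, inner_sub_left, real_inner_smul_left, real_inner_smul_left] at a2
    rw [hzp] at a3
    have a5 : ∀ (t : ℝ) (q : H),
        ⟪t • q + t • lam, t • q⟫ = (t * t) * (‖q‖ ^ 2 + ⟪q, lam⟫) := by
      intro t q
      rw [inner_add_left, real_inner_smul_left, real_inner_smul_left, real_inner_smul_right,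
        real_inner_smul_right, real_inner_self_eq_norm_sq, real_inner_comm]
      ring
    rw [a5] at a3
    have ht := h2 k
    have b1 : tk k * (⟪vk k, lam⟫ - ⟪e k, lam⟫) ≤ 0 := by linarith
    have b2 : (tk k * tk k) * (‖e k‖ ^ 2 + ⟪e k, lam⟫) ≤ 0 := by linarith
    have b1' : ⟪vk k, lam⟫ - ⟪e k, lam⟫ ≤ 0 := by
      by_contra hh; push Not at hh; have := mul_pos ht hh; linarith
    have b2' : ‖e k‖ ^ 2 + ⟪e k, lam⟫ ≤ 0 := by
      by_contra hh; push Not at hh; have := mul_pos (mul_pos ht ht) hh; linarith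
    linarith
  have he0 : Tendsto e atTop (𝓝 0) := by
    refine squeeze_zero_norm' heb ?_
    have : Tendsto (fun k => -⟪vk k, lam⟫) atTop (𝓝 (-⟪v, lam⟫)) :=
      (h1.inner tendsto_const_nhds).neg
    rw [horth, neg_zero] at this
    have h5 := (Real.continuous_sqrt.tendsto 0).comp this
    rw [Real.sqrt_zero] at h5
    exact h5
  have hpk : ∀ k, p k = y + tk k • (vk k - e k) := by
    intro k
    have hzp : z k - p k = tk k • e k := by
      simp only [he, smul_smul, mul_inv_cancel₀ (h2 k).ne', one_smul]
    rw [smul_sub, ← hzp]; simp only [hz]; abel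
  have hdk : Tendsto (fun k => vk k - e k) atTop (𝓝 v) := by simpa using h1.sub he0
  have hpt : Tendsto p atTop (𝓝 y) := by
    have : Tendsto (fun k => y + tk k • (vk k - e k)) atTop (𝓝 y) := by
      simpa using (h3.smul hdk).const_add y
    exact this.congr fun k => (hpk k).symm
  obtain ⟨N, hN⟩ := eventually_atTop.1 (hpt (ball_mem_nhds y hr))
  refine ⟨hy, fun k => vk (k + N) - e (k + N), fun k => tk (k + N), fun k => e (k + N) + lam,
    (tendsto_add_atTop_iff_nat N).2 hdk, fun k => h2 _, (tendsto_add_atTop_iff_nat N).2 h3, ?_, ?_⟩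
  · simpa using ((tendsto_add_atTop_iff_nat N).2 he0).add_const lam
  · intro k
    have hb := hN (k + N) (by omega)
    have hm := hpk (k + N)
    rw [← hm]
    refine ⟨(hPC _).1, ?_⟩
    rintro w ⟨-, wk, sk, w1, w2, w3, w4⟩
    have hq : Tendsto (fun j => p (k + N) + sk j • wk j) atTop (𝓝 (p (k + N))) := by
      simpa using (w3.smul w1).const_add (p (k + N))
    have hev := hq (isOpen_ball.mem_nhds hb)
    refine le_of_tendsto (w1.inner tendsto_const_nhds) ?_
    filter_upwards [hev] with j hj
    have a1 := hP (z (k + N) + tk (k + N) • lam) (p (k + N) + sk j • wk j)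
      ⟨w4 j, ball_subset_closedBall hj⟩
    have a2 : ⟪tk (k + N) • (e (k + N) + lam), sk j • wk j⟫ ≤ 0 := by
      convert a1 using 2
      · simp only [he, smul_add, smul_smul, mul_inv_cancel₀ (h2 (k + N)).ne', one_smul, hp]
        abel
      · simp only [hp]; abel
    rw [real_inner_smul_left, real_inner_smul_right, real_inner_comm] at a2
    by_contra hh
    push Not at hh
    have := mul_pos (h2 (k + N)) (mul_pos (w2 j) hh)
    linarith

/-- Multiplier existence from a linear error bound. -/
lemma aux_mult {n l : ℕ} (A : Eu n →L[ℝ] Eu l) {T : Set (Eu l)} (h0 : (0 : Eu l) ∈ T)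
    (hadd : ∀ v ∈ T, ∀ w ∈ T, v + w ∈ T) (hsm : ∀ v ∈ T, ∀ s : ℝ, 0 < s → s • v ∈ T)
    (g : Eu n) {r : ℝ} (hr : 0 < r) (hb : ∀ u, ∀ w ∈ T, ⟪g, u⟫ ≤ r * ‖A u - w‖) :
    ∃ lam ∈ polarCone T, ∀ u, ⟪lam, A u⟫ = ⟪g, u⟫ := by
  set K : Set (Eu l) := polarCone T ∩ closedBall 0 r with hK
  have hpolcl : IsClosed (polarCone T) := by
    have : polarCone T = ⋂ x ∈ T, {y : Eu l | ⟪x, y⟫ ≤ 0} := by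
      ext y; simp [polarCone]
    rw [this]
    exact isClosed_biInter fun x _ => isClosed_le (by fun_prop) (by fun_prop)
  have hpolconv : Convex ℝ (polarCone T) := by
    intro a ha b hb' s t hs ht _ x hx
    rw [inner_add_right, real_inner_smul_right, real_inner_smul_right]
    have := mul_nonneg hs (neg_nonneg.2 (ha x hx))
    have := mul_nonneg ht (neg_nonneg.2 (hb' x hx))
    linarith
  have hKc : IsCompact K := (isCompact_closedBall (0 : Eu l) r).inter_left hpolcl
  have hKconv : Convex ℝ K := hpolconv.inter (convex_closedBall _ _)
  set B := ContinuousLinearMap.adjoint A with hB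
  by_cases hmem : g ∈ B '' K
  · obtain ⟨lam, hlam, he⟩ := hmem
    refine ⟨lam, hlam.1, fun u => ?_⟩
    rw [← he, ContinuousLinearMap.adjoint_inner_left]
  exfalso
  have hc1 : Convex ℝ (B '' K) := hKconv.linear_image B.toLinearMap
  have hc2 : IsClosed (B '' K) := (hKc.image B.continuous).isClosed
  obtain ⟨φ, c, hφ1, hφ2⟩ := geometric_hahn_banach_closed_point hc1 hc2 hmem
  set u := (InnerProductSpace.toDual ℝ (Eu n)).symm φ with hu
  have hφ : ∀ a, φ a = ⟪u, a⟫ := fun a => by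
    rw [hu, InnerProductSpace.toDual_symm_apply]
  set S := closure T with hS
  have hTconv : Convex ℝ T := by
    intro a ha b hb' s t hs ht hst
    rcases hs.eq_or_lt with rfl | hs
    · have : t = 1 := by linarith
      simpa [this] using hb'
    rcases ht.eq_or_lt with rfl | ht
    · have : s = 1 := by linarith
      simpa [this] using ha
    exact hadd _ (hsm a ha s hs) _ (hsm b hb' t ht)
  have hSconv : Convex ℝ S := hTconv.closure
  obtain ⟨p, hp, hpe⟩ := exists_norm_eq_iInf_of_complete_convex ⟨0, subset_closure h0⟩
    isClosed_closure.isComplete hSconv (A u)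
  have hvi := (norm_eq_iInf_iff_real_inner_le_zero hSconv hp).1 hpe
  set mu := A u - p with hmu
  have hpT : ∀ w ∈ T, p + w ∈ S := by
    intro w hw
    exact map_mem_closure (f := fun q => q + w) (by fun_prop) hp (fun q hq => hadd q hq w hw)
  have hmupol : mu ∈ polarCone T := by
    intro w hw
    have := hvi _ (hpT w hw)
    rw [add_sub_cancel_left, real_inner_comm] at this
    exact this
  have hmup : 0 ≤ ⟪mu, p⟫ := by
    have := hvi 0 (subset_closure h0)
    rw [zero_sub, inner_neg_right] at this
    linarith
  have hmuA : ‖mu‖ ^ 2 ≤ ⟪mu, A u⟫ := by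
    have : A u = mu + p := by rw [hmu]; abel
    rw [this, inner_add_right, real_inner_self_eq_norm_sq]
    linarith
  have hgb : ⟪g, u⟫ ≤ r * ‖mu‖ := by
    have hcl : IsClosed {w : Eu l | ⟪g, u⟫ ≤ r * ‖A u - w‖} :=
      isClosed_le (by fun_prop) (by fun_prop)
    exact closure_minimal (fun w hw => hb u w hw) hcl hp
  have hK1 : (r * ‖mu‖⁻¹) • mu ∈ K := by
    have hnn : 0 ≤ r * ‖mu‖⁻¹ := by positivity
    refine ⟨fun w hw => ?_, ?_⟩
    · rw [real_inner_smul_right]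
      exact mul_nonpos_of_nonneg_of_nonpos hnn (hmupol w hw)
    · rw [mem_closedBall_zero_iff, norm_smul, Real.norm_of_nonneg hnn, mul_assoc]
      exact mul_le_of_le_one_right hr.le inv_mul_le_one
  have h1 := hφ1 _ (mem_image_of_mem B hK1)
  rw [hφ, real_inner_comm, hB, ContinuousLinearMap.adjoint_inner_left, real_inner_smul_left] at h1
  rw [hφ, real_inner_comm] at hφ2
  have h2 : r * ‖mu‖ ≤ r * ‖mu‖⁻¹ * ⟪mu, A u⟫ := by
    have : r * ‖mu‖ = r * ‖mu‖⁻¹ * ‖mu‖ ^ 2 := by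
      by_cases h : ‖mu‖ = 0
      · simp [h]
      · field_simp
    rw [this]
    exact mul_le_mul_of_nonneg_left hmuA (by positivity)
  linarith

lemma aux_pl2 {H : Type*} [NormedAddCommGroup H] [InnerProductSpace ℝ H] :
    Continuous (fun q : H × ℝ => pl2 q.1 q.2) := by
  unfold pl2
  exact WithLp.prod_continuous_toLp 2 H ℝ

lemma aux_epi {H : Type*} [NormedAddCommGroup H] [InnerProductSpace ℝ H]
    {φ : H → ℝ} {z ξ : H} {φ' : H →L[ℝ] ℝ} (hφ : HasFDerivAt φ φ' z) (hξ : ∀ w, φ' w = ⟪w, ξ⟫) :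
    pl2 ξ (-1) ∈ regNormal (epigraphSet φ) (pl2 z (φ z)) := by
  refine ⟨le_refl (φ z), ?_⟩
  rintro w ⟨-, wk, tk, h1, h2, h3, h4⟩
  have c : Continuous (fun q : WithLp 2 (H × ℝ) => WithLp.ofLp q) := WithLp.prod_continuous_ofLp 2 H ℝ
  have hc := (c.tendsto w).comp h1
  have hfst : Tendsto (fun k => (WithLp.ofLp (wk k)).1) atTop (𝓝 (WithLp.ofLp w).1) :=
    (continuous_fst.tendsto _).comp hc
  have hsnd : Tendsto (fun k => (WithLp.ofLp (wk k)).2) atTop (𝓝 (WithLp.ofLp w).2) :=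
    (continuous_snd.tendsto _).comp hc
  have hl := aux_lim hφ hfst h2 h3
  have hle : φ' (WithLp.ofLp w).1 ≤ (WithLp.ofLp w).2 := by
    refine le_of_tendsto_of_tendsto' hl hsnd fun k => ?_
    have a : φ (z + tk k • (WithLp.ofLp (wk k)).1) ≤ φ z + tk k * (WithLp.ofLp (wk k)).2 := h4 k
    rw [smul_eq_mul, inv_mul_le_iff₀ (h2 k)]
    linarith
  rw [WithLp.prod_inner_apply]
  rw [hξ] at hle
  change ⟪(WithLp.ofLp w).1, ξ⟫ + ⟪(WithLp.ofLp w).2, (-1 : ℝ)⟫ ≤ 0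
  have : ⟪(WithLp.ofLp w).2, (-1 : ℝ)⟫ = -(WithLp.ofLp w).2 := by
    simp
  linarith

/-- Directional M-stationarity of local minimizers under GGCQ, local convexity of `Γ`,
and directional metric subregularity of the linearized feasibility mapping. -/
theorem stmt9 {n l : ℕ}
    (f : Eu n → ℝ) (hf : ContDiff ℝ 1 f)
    (F : Eu n → Eu l) (F' : Eu n → Eu n → Eu l)
    (hLip : LocallyLipschitz F) (hF' : IsDirDeriv F F')
    (Γ : Set (Eu l)) (hΓne : Γ.Nonempty) (hΓcl : IsClosed Γ)
    (x : Eu n) (hfeas : F x ∈ Γ) (hmin : IsLocalMinOn f (F ⁻¹' Γ) x)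
    (hFsm : ∃ U ∈ 𝓝 x, ContDiffOn ℝ 1 F U)
    (hGGCQ : regNormal (F ⁻¹' Γ) x = polarCone (linCone F F' Γ x))
    (d : Eu n) (hd : d ∈ critCone f F F' Γ x) (hd1 : ‖d‖ = 1)
    (hconv : ∃ V ∈ 𝓝 (F x), Convex ℝ (Γ ∩ V))
    (hsubreg : ∃ ε > (0:ℝ), ∃ δ > (0:ℝ), ∃ κ > (0:ℝ), ∀ u : Eu n, u ∈ dirNbhd d ε δ →
      infDist u {w : Eu n | fderiv ℝ F x w ∈ tanCone Γ (F x)} ≤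
        κ * infDist (0 : Eu l) {v : Eu l | ∃ w ∈ tanCone Γ (F x), v = fderiv ℝ F x u - w}) :
    MStatDir f F F' Γ x d := by
  obtain ⟨U, hU, hFU⟩ := hFsm
  obtain ⟨V, hV, hVc⟩ := hconv
  obtain ⟨r, hr, hrV⟩ := Metric.nhds_basis_closedBall.mem_iff.1 hV
  have hC : Convex ℝ (Γ ∩ closedBall (F x) r) := by
    have : Γ ∩ closedBall (F x) r = (Γ ∩ V) ∩ closedBall (F x) r := by
      rw [inter_assoc, inter_eq_self_of_subset_right hrV]
    rw [this]
    exact hVc.inter (convex_closedBall _ _)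
  have hFC : ContDiffAt ℝ 1 F x := hFU.contDiffAt hU
  set A := fderiv ℝ F x with hA
  have hFd : HasFDerivAt F A x := (hFC.differentiableAt (by norm_num)).hasFDerivAt
  have ht0 : Tendsto (fun k : ℕ => 1 / ((k : ℝ) + 1)) atTop (𝓝 0) :=
    tendsto_one_div_add_atTop_nhds_zero_nat
  have htpos : ∀ k : ℕ, 0 < 1 / ((k : ℝ) + 1) := fun k => by positivity
  have hF'A : ∀ w, F' x w = A w := by
    intro w
    have h1 := aux_lim hFd (tendsto_const_nhds (x := w)) htpos ht0
    have h2 := (hF' x w).comp (tendsto_nhdsWithin_iff.2 ⟨ht0, .of_forall htpos⟩)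
    exact tendsto_nhds_unique h2 h1
  obtain ⟨hd0, hdl⟩ := hd
  set T := tanCone Γ (F x) with hT
  have hAd : A d ∈ T := by rw [← hF'A]; exact hdl
  set g := -gradient f x with hg
  have hfd : HasFDerivAt f (fderiv ℝ f x) x := (hf.differentiable (by norm_num) x).hasFDerivAt
  have hgrad : ∀ w, fderiv ℝ f x w = ⟪gradient f x, w⟫ := by
    intro w
    rw [← toDual_gradient, InnerProductSpace.toDual_apply_apply]
  have hgreg : g ∈ regNormal (F ⁻¹' Γ) x := by
    refine ⟨hfeas, ?_⟩
    rintro w ⟨-, wk, tk, h1, h2, h3, h4⟩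
    have hl := aux_lim hfd h1 h2 h3
    have hxt : Tendsto (fun k => x + tk k • wk k) atTop (𝓝[F ⁻¹' Γ] x) := by
      refine tendsto_nhdsWithin_iff.2 ⟨?_, .of_forall h4⟩
      simpa using (h3.smul h1).const_add x
    have : 0 ≤ fderiv ℝ f x w := by
      refine ge_of_tendsto hl ?_
      filter_upwards [hxt.eventually hmin] with k hk
      have := h2 k
      exact smul_nonneg (inv_nonneg.2 this.le) (sub_nonneg.2 hk)
    rw [hgrad] at this
    rw [hg, inner_neg_right, real_inner_comm]
    linarith
  have hgL : ∀ w, A w ∈ T → ⟪g, w⟫ ≤ 0 := by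
    rw [hGGCQ] at hgreg
    intro w hw
    rw [real_inner_comm]
    refine hgreg w ?_
    change F' x w ∈ T
    rw [hF'A]; exact hw
  have hgd : ⟪g, d⟫ = 0 := by
    refine le_antisymm (hgL d hAd) ?_
    rw [hg, inner_neg_left]; linarith
  have hT0 : (0 : Eu l) ∈ T := aux_tan_zero hfeas
  have hTadd : ∀ v ∈ T, ∀ w ∈ T, v + w ∈ T := fun v hv w hw => aux_tan_add hr hC hv hw
  have hTsm : ∀ v ∈ T, ∀ s : ℝ, 0 < s → s • v ∈ T := fun v hv s hs => aux_tan_smul hv hs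
  obtain ⟨ε, hε, δ, hδ, κ, hκ, hsub⟩ := hsubreg
  have hG : 0 < ‖g‖ + 1 := by positivity
  have hdist : ∀ y : Eu n, ⟪g, y⟫ ≤ (‖g‖ + 1) * infDist y {w : Eu n | A w ∈ T} := by
    intro y
    rw [← div_le_iff₀' hG]
    refine (le_infDist ⟨d, hAd⟩).2 fun q hq => ?_
    rw [div_le_iff₀' hG, dist_eq_norm]
    have h1 := hgL q hq
    have h2 := real_inner_le_norm g (y - q)
    rw [inner_sub_right] at h2
    have := norm_nonneg (y - q)
    nlinarith
  have hbound : ∀ u, ∀ w ∈ T, ⟪g, u⟫ ≤ (κ * (‖g‖ + 1)) * ‖A u - w‖ := by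
    intro u w hw
    have e1 : ∀ᶠ s in 𝓝[>] (0:ℝ), ‖(ε / 2) • (d + s • u)‖ < ε := by
      have : ContinuousAt (fun s : ℝ => ‖(ε / 2) • (d + s • u)‖) 0 := by fun_prop
      refine (this.tendsto.mono_left nhdsWithin_le_nhds).eventually_lt_const ?_
      simp only [zero_smul, add_zero, norm_smul, hd1, Real.norm_eq_abs, abs_of_pos (half_pos hε)]
      linarith
    have e2 : ∀ᶠ s in 𝓝[>] (0:ℝ), ‖‖d‖ • ((ε / 2) • (d + s • u)) - ‖(ε / 2) • (d + s • u)‖ • d‖ -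
        δ * (‖(ε / 2) • (d + s • u)‖ * ‖d‖) < 0 := by
      have : ContinuousAt (fun s : ℝ => ‖‖d‖ • ((ε / 2) • (d + s • u)) -
        ‖(ε / 2) • (d + s • u)‖ • d‖ - δ * (‖(ε / 2) • (d + s • u)‖ * ‖d‖)) 0 := by fun_prop
      refine (this.tendsto.mono_left nhdsWithin_le_nhds).eventually_lt_const ?_
      simp only [zero_smul, add_zero, norm_smul, hd1, Real.norm_eq_abs, abs_of_pos (half_pos hε),
        one_smul, mul_one, sub_self, norm_zero, zero_sub]
      have := mul_pos hδ (half_pos hε)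
      linarith
    obtain ⟨s, ⟨hs1, hs2⟩, hs⟩ := ((e1.and e2).and self_mem_nhdsWithin).exists
    have hs : 0 < s := hs
    set y := (ε / 2) • (d + s • u) with hy
    have h1 := hsub y ⟨hs1.le, by linarith⟩
    have hw' : (ε / 2) • (A d + s • w) ∈ T :=
      hTsm _ (hTadd _ hAd _ (hTsm _ hw s hs)) _ (half_pos hε)
    have h2 := infDist_le_dist_of_mem (x := (0 : Eu l))
      (s := {v : Eu l | ∃ w ∈ T, v = A y - w}) ⟨_, hw', rfl⟩
    have h3 : A y - (ε / 2) • (A d + s • w) = (ε / 2 * s) • (A u - w) := by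
      rw [hy, map_smul, map_add, map_smul]
      module
    have hes : 0 < ε / 2 * s := mul_pos (half_pos hε) hs
    rw [dist_zero_left, h3, norm_smul, Real.norm_of_nonneg hes.le] at h2
    have h4 := hdist y
    have h5 : ⟪g, y⟫ = (ε / 2 * s) * ⟪g, u⟫ := by
      rw [hy, real_inner_smul_right, inner_add_right, hgd, real_inner_smul_right]
      ring
    rw [h5] at h4
    have h6 : (‖g‖ + 1) * infDist y {w : Eu n | A w ∈ T} ≤
        (‖g‖ + 1) * (κ * ((ε / 2 * s) * ‖A u - w‖)) :=
      mul_le_mul_of_nonneg_left (h1.trans (mul_le_mul_of_nonneg_left h2 hκ.le)) hG.le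
    have h7 : (ε / 2 * s) * ⟪g, u⟫ ≤ (ε / 2 * s) * ((κ * (‖g‖ + 1)) * ‖A u - w‖) := by
      refine (h4.trans h6).trans (le_of_eq ?_)
      ring
    exact le_of_mul_le_mul_left h7 hes
  obtain ⟨lam, hlam, hlamA⟩ := aux_mult A hT0 hTadd hTsm g (mul_pos hκ hG) hbound
  refine ⟨lam, ?_, ?_⟩
  · -- the subdifferential part
    have hev : ∀ᶠ z in 𝓝 x, ContDiffAt ℝ 1 F z := hFC.eventually (by norm_num)
    have hxk : Tendsto (fun k : ℕ => x + (1 / ((k : ℝ) + 1)) • d) atTop (𝓝 x) := by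
      simpa using (ht0.smul_const d).const_add x
    obtain ⟨N, hN⟩ := eventually_atTop.1 (hxk.eventually hev)
    set t : ℕ → ℝ := fun k => 1 / (((k + N : ℕ) : ℝ) + 1) with ht
    have htp : ∀ k, 0 < t k := fun k => htpos (k + N)
    have htt : Tendsto t atTop (𝓝 0) := (tendsto_add_atTop_iff_nat N).2 ht0
    have hxt : Tendsto (fun k => x + t k • d) atTop (𝓝 x) := (tendsto_add_atTop_iff_nat N).2 hxk
    set φ : Eu n → ℝ := fun y => ⟪lam, F y⟫ with hφ
    have hφd : ∀ z, ContDiffAt ℝ 1 F z →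
        HasFDerivAt φ ((innerSL ℝ lam).comp (fderiv ℝ F z)) z := by
      intro z hz
      exact (innerSL ℝ lam).hasFDerivAt.comp z
        (hz.differentiableAt (by norm_num)).hasFDerivAt
    have hquot := aux_lim (hφd x hFC) (tendsto_const_nhds (x := d)) htp htt
    set ξ : ℕ → Eu n := fun k => ContinuousLinearMap.adjoint (fderiv ℝ F (x + t k • d)) lam with hξ
    have hgA : ContinuousLinearMap.adjoint A lam = g := by
      refine ext_inner_right ℝ fun u => ?_
      rw [ContinuousLinearMap.adjoint_inner_left, hlamA]
    have hξt : Tendsto ξ atTop (𝓝 g) := by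
      have c1 : ContinuousAt (fderiv ℝ F) x := hFC.continuousAt_fderiv (by norm_num)
      have c2 : Tendsto (fun k => fderiv ℝ F (x + t k • d)) atTop (𝓝 A) := c1.tendsto.comp hxt
      have c3 : Tendsto (fun k => ContinuousLinearMap.adjoint (fderiv ℝ F (x + t k • d))) atTop
          (𝓝 (ContinuousLinearMap.adjoint A)) :=
        ((ContinuousLinearMap.adjoint (𝕜 := ℝ) (E := Eu n) (F := Eu l)).continuous.tendsto A).comp c2
      have c4 := ((ContinuousLinearMap.apply ℝ (Eu n) lam).continuous.tendsto
        (ContinuousLinearMap.adjoint A)).comp c3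
      rw [ContinuousLinearMap.apply_apply] at c4
      rw [hgA] at c4
      exact c4
    refine ⟨le_refl (φ x), fun k => pl2 d ((t k)⁻¹ • (φ (x + t k • d) - φ x)), t,
      fun k => pl2 (ξ k) (-1), ?_, htp, htt, ?_, fun k => ?_⟩
    · have := (aux_pl2.tendsto (d, ((innerSL ℝ lam).comp A) d)).comp
        ((tendsto_const_nhds (x := d)).prodMk_nhds hquot)
      rw [hF'A]
      exact this
    · exact (aux_pl2.tendsto (g, (-1 : ℝ))).comp (hξt.prodMk_nhds tendsto_const_nhds)
    · have hpt : pl2 x (φ x) + t k • pl2 d ((t k)⁻¹ • (φ (x + t k • d) - φ x)) =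
          pl2 (x + t k • d) (φ (x + t k • d)) := by
        have : φ (x + t k • d) = φ x + t k • ((t k)⁻¹ • (φ (x + t k • d) - φ x)) := by
          rw [smul_smul, mul_inv_cancel₀ (htp k).ne', one_smul]; ring
        conv_rhs => rw [this]
        rfl
      rw [hpt]
      refine aux_epi (hφd _ (hN (k + N) (by omega))) fun w => ?_
      rw [ContinuousLinearMap.comp_apply, innerSL_apply_apply, hξ,
        ContinuousLinearMap.adjoint_inner_right, real_inner_comm]
  · rw [hF'A]
    refine aux_dirLim hΓcl hr hC hAd hlam ?_
    rw [real_inner_comm, hlamA, hgd]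

end
end

section
/- Let x̄ be feasible for (P), let d ∈ C(x̄) ∩ 𝕊, and let {(x^k, λ^k, δ^k, ε^k)} be an AM-stationary sequence w.r.t. x̄ in direction d. If the sequence {λ^k} is bounded, then x̄ is M-stationary in direction d. -/
open Filter Topology Metric Set
open scoped RealInnerProductSpace Pointwise

noncomputable section

section Helpers

variable {H : Type*} [NormedAddCommGroup H] [InnerProductSpace ℝ H]

lemma pl2_add_smul (a b : H) (r s t : ℝ) :
    pl2 a r + t • pl2 b s = pl2 (a + t • b) (r + t * s) := rfl

lemma pl2_surj (p : WithLp 2 (H × ℝ)) : ∃ a r, p = pl2 a r := ⟨p.fst, p.snd, rfl⟩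

lemma pl2_inner (a b : H) (r s : ℝ) : ⟪pl2 a r, pl2 b s⟫ = ⟪a, b⟫ + r * s := by
  rw [WithLp.prod_inner_apply]
  simp [pl2, mul_comm]

lemma mem_epi (φ : H → ℝ) (a : H) (r : ℝ) : pl2 a r ∈ epigraphSet φ ↔ φ a ≤ r := Iff.rfl

lemma pl2_tendsto {ι : Type*} {l : Filter ι} {a : ι → H} {r : ι → ℝ} {a0 : H} {r0 : ℝ}
    (ha : Tendsto a l (𝓝 a0)) (hr : Tendsto r l (𝓝 r0)) :
    Tendsto (fun k => pl2 (a k) (r k)) l (𝓝 (pl2 a0 r0)) :=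
  ((WithLp.prod_continuous_toLp 2 H ℝ).tendsto (a0, r0)).comp (ha.prodMk_nhds hr)

lemma fst_tendsto {ι : Type*} {l : Filter ι} {a : ι → H} {r : ι → ℝ} {a0 : H} {r0 : ℝ}
    (h : Tendsto (fun k => pl2 (a k) (r k)) l (𝓝 (pl2 a0 r0))) :
    Tendsto a l (𝓝 a0) ∧ Tendsto r l (𝓝 r0) := by
  have := ((WithLp.prod_continuous_ofLp 2 H ℝ).tendsto (pl2 a0 r0)).comp h
  exact ⟨(continuous_fst.tendsto _).comp this, (continuous_snd.tendsto _).comp this⟩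

lemma dirLimNormal_of_eventually {Ω : Set H} {x d η : H} (hx : x ∈ Ω)
    (dk : ℕ → H) (tk : ℕ → ℝ) (ηk : ℕ → H)
    (h1 : Tendsto dk atTop (𝓝 d)) (h2 : ∀ k, 0 < tk k) (h3 : Tendsto tk atTop (𝓝 0))
    (h4 : Tendsto ηk atTop (𝓝 η))
    (h5 : ∀ᶠ k in atTop, ηk k ∈ regNormal Ω (x + tk k • dk k)) :
    η ∈ dirLimNormal Ω x d := by
  obtain ⟨N, hN⟩ := eventually_atTop.1 h5
  have hs := tendsto_add_atTop_nat N
  exact ⟨hx, fun k => dk (k + N), fun k => tk (k + N), fun k => ηk (k + N),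
    h1.comp hs, fun k => h2 _, h3.comp hs, h4.comp hs, fun k => hN _ (by omega)⟩

lemma limNormal_approx {Ω : Set H} {x η : H} (h : η ∈ limNormal Ω x) {ε : ℝ} (hε : 0 < ε) :
    ∃ y η', ‖y - x‖ ≤ ε ∧ ‖η' - η‖ ≤ ε ∧ η' ∈ regNormal Ω y := by
  obtain ⟨_, xk, ηk, h1, h2, h3⟩ := h
  have e1 := (Metric.tendsto_nhds.1 h1) ε hε
  have e2 := (Metric.tendsto_nhds.1 h2) ε hε
  obtain ⟨k, k1, k2⟩ := (e1.and e2).exists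
  rw [dist_eq_norm] at k1 k2
  exact ⟨_, _, k1.le, k2.le, h3 k⟩

/-- Regular normals to the epigraph give Frechet lower estimates. -/
lemma frechet_of_reg {n : ℕ} (φ : Eu n → ℝ) (z ξ : Eu n) (α s : ℝ) (hs : 0 < s)
    (h : pl2 ξ (-s) ∈ regNormal (epigraphSet φ) (pl2 z α)) {ε : ℝ} (hε : 0 < ε) :
    ∀ᶠ y in 𝓝 z, φ z + ⟪s⁻¹ • ξ, y - z⟫ - ε * ‖y - z‖ ≤ φ y := by
  by_contra hcon
  rw [not_eventually] at hcon
  obtain ⟨y, hy, hyv⟩ := exists_seq_forall_of_frequently hcon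
  simp only [not_le] at hyv
  have hne : ∀ k, 0 < ‖y k - z‖ := by
    intro k
    rw [norm_pos_iff]
    intro h0
    have h1 := hyv k
    have h2 : y k = z := sub_eq_zero.1 h0
    rw [h2] at h1
    simp at h1
  have hu : ∀ k, ‖y k - z‖⁻¹ • (y k - z) ∈ sphere (0 : Eu n) 1 := by
    intro k
    rw [mem_sphere_zero_iff_norm, norm_smul, norm_inv, norm_norm, inv_mul_cancel₀ (hne k).ne']
  obtain ⟨u, _, g, hg, hlim⟩ := (isCompact_sphere (0 : Eu n) 1).tendsto_subseq hu
  have ht0 : Tendsto (fun k => ‖y k - z‖) atTop (𝓝 0) := by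
    have := (hy.sub_const z).norm
    simpa using this
  have hmem : pl2 u (⟪s⁻¹ • ξ, u⟫ - ε) ∈ tanCone (epigraphSet φ) (pl2 z α) := by
    refine ⟨h.1, fun k => pl2 (‖y (g k) - z‖⁻¹ • (y (g k) - z))
      (⟪s⁻¹ • ξ, ‖y (g k) - z‖⁻¹ • (y (g k) - z)⟫ - ε), fun k => ‖y (g k) - z‖, ?_,
      fun k => hne _, ht0.comp hg.tendsto_atTop, ?_⟩
    · refine pl2_tendsto hlim ?_
      exact (Tendsto.inner tendsto_const_nhds hlim).sub_const ε
    · intro k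
      have hz : φ z ≤ α := h.1
      have h1 := hyv (g k)
      have h2 := hne (g k)
      rw [pl2_add_smul, mem_epi, smul_smul, mul_inv_cancel₀ h2.ne', one_smul,
        add_sub_cancel, inner_smul_right, mul_sub, ← mul_assoc, mul_inv_cancel₀ h2.ne', one_mul]
      linarith
  have h3 := h.2 _ hmem
  rw [pl2_inner, inner_smul_left, real_inner_comm ξ u] at h3
  simp only [conj_trivial] at h3
  have h4 : s⁻¹ * ⟪ξ, u⟫ * s = ⟪ξ, u⟫ := by field_simp
  rw [real_inner_comm] at h3
  have h5 := mul_pos hε hs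
  rw [real_inner_comm] at h4
  first
    | nlinarith
    | (rw [real_inner_comm] at h4; nlinarith)

/-- Quadratic minorants give regular normals to the epigraph. -/
lemma reg_of_quad {n : ℕ} (φ : Eu n → ℝ) (y ξ : Eu n) (K : ℝ)
    (h : ∀ᶠ w in 𝓝 y, φ y + ⟪ξ, w - y⟫ - K * ‖w - y‖ ^ 2 ≤ φ w) :
    pl2 ξ (-1) ∈ regNormal (epigraphSet φ) (pl2 y (φ y)) := by
  refine ⟨le_refl (φ y), ?_⟩
  rintro p ⟨_, pk, tk, hp, ht, ht0, hmem⟩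
  obtain ⟨u, r, rfl⟩ := pl2_surj p
  have hex : ∀ k, ∃ a b, pk k = pl2 a b := fun k => pl2_surj _
  choose uk rk hk using hex
  obtain rfl : pk = fun k => pl2 (uk k) (rk k) := funext hk
  obtain ⟨hu, hr⟩ := fst_tendsto hp
  have hw : Tendsto (fun k => y + tk k • uk k) atTop (𝓝 y) := by
    have := (ht0.smul hu).const_add y
    simpa using this
  have hev : ∀ᶠ k in atTop, ⟪ξ, uk k⟫ - K * tk k * ‖uk k‖ ^ 2 ≤ rk k := by
    filter_upwards [hw.eventually h] with k h1
    have h2 := hmem k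
    rw [pl2_add_smul, mem_epi] at h2
    rw [add_sub_cancel_left, inner_smul_right, norm_smul, Real.norm_of_nonneg (ht k).le] at h1
    have h3 : tk k * (⟪ξ, uk k⟫ - K * tk k * ‖uk k‖ ^ 2) ≤ tk k * rk k := by
      calc _ = tk k * ⟪ξ, uk k⟫ - K * (tk k * ‖uk k‖) ^ 2 := by ring
        _ ≤ _ := by linarith
    exact le_of_mul_le_mul_left h3 (ht k)
  have hl : Tendsto (fun k => ⟪ξ, uk k⟫ - K * tk k * ‖uk k‖ ^ 2) atTop
      (𝓝 (⟪ξ, u⟫ - K * 0 * ‖u‖ ^ 2)) :=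
    (Tendsto.inner tendsto_const_nhds hu).sub ((ht0.const_mul K).mul (hu.norm.pow 2))
  have := le_of_tendsto_of_tendsto hl hr hev
  rw [pl2_inner, real_inner_comm]
  linarith

/-- Fuzzy perturbation: an approximate minorant yields a nearby exact regular subgradient. -/
lemma fuzzy {n : ℕ} (φ : Eu n → ℝ) (hc : Continuous φ) (z ξ : Eu n) (c : ℝ) (hc0 : 0 < c)
    (h : ∀ᶠ y in 𝓝 z, φ z + ⟪ξ, y - z⟫ - c * ‖y - z‖ ≤ φ y) {ρ : ℝ} (hρ : 0 < ρ) :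
    ∃ y ξ', ‖y - z‖ ≤ ρ ∧ ‖ξ' - ξ‖ ≤ 2 * c ∧
      pl2 ξ' (-1) ∈ regNormal (epigraphSet φ) (pl2 y (φ y)) := by
  obtain ⟨r0, hr0, hb⟩ := Metric.eventually_nhds_iff.1 h
  obtain ⟨r, hr, hrr0, hrρ⟩ : ∃ r, 0 < r ∧ r < r0 ∧ r ≤ ρ :=
    ⟨min (r0 / 2) ρ, by positivity, lt_of_le_of_lt (min_le_left _ _) (by linarith),
      min_le_right _ _⟩
  set K : ℝ := 2 * c / r with hK
  have hKpos : 0 < K := by positivity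
  have hKr : K * r = 2 * c := by rw [hK]; field_simp
  have hcont : Continuous (fun y => φ y - ⟪ξ, y - z⟫ + K * ‖y - z‖ ^ 2) := by fun_prop
  obtain ⟨y, hy, hmin⟩ := (isCompact_closedBall z r).exists_isMinOn
    ⟨z, mem_closedBall_self hr.le⟩ hcont.continuousOn
  have hyr : ‖y - z‖ ≤ r := by rwa [mem_closedBall, dist_eq_norm] at hy
  have h1 : φ y - ⟪ξ, y - z⟫ + K * ‖y - z‖ ^ 2 ≤ φ z := by
    have := hmin (mem_closedBall_self hr.le)
    simpa using this
  have h2 := hb (y := y) (by rw [dist_eq_norm]; linarith)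
  have h3 : K * ‖y - z‖ ≤ c := by
    by_contra hcon
    push Not at hcon
    rcases (norm_nonneg (y - z)).eq_or_lt with h0 | h0
    · rw [← h0] at hcon; linarith
    · nlinarith
  have h4 : ‖y - z‖ < r := by nlinarith
  refine ⟨y, ξ - (2 * K) • (y - z), hyr.trans hrρ, ?_, reg_of_quad φ y _ K ?_⟩
  · rw [sub_sub_cancel_left, norm_neg, norm_smul, Real.norm_of_nonneg (by positivity)]
    linarith
  · have hnb : ball z r ∈ 𝓝 y := isOpen_ball.mem_nhds (by rwa [mem_ball, dist_eq_norm])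
    filter_upwards [hnb] with w hw
    have h5 : φ y - ⟪ξ, y - z⟫ + K * ‖y - z‖ ^ 2 ≤ φ w - ⟪ξ, w - z⟫ + K * ‖w - z‖ ^ 2 :=
      hmin (ball_subset_closedBall hw)
    have h6 : w - z = (y - z) + (w - y) := by abel
    rw [h6, norm_add_sq_real, inner_add_right] at h5
    rw [inner_sub_left, inner_smul_left]
    simp only [conj_trivial]
    linarith

/-- Hadamard-type directional derivative along sequences. -/
lemma hadamard {n l : ℕ} (F : Eu n → Eu l) (F' : Eu n → Eu n → Eu l)
    (hLip : LocallyLipschitz F) (hF' : IsDirDeriv F F') (x d : Eu n)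
    (w : ℕ → Eu n) (t : ℕ → ℝ) (ht : ∀ k, 0 < t k) (ht0 : Tendsto t atTop (𝓝 0))
    (hw : Tendsto (fun k => (t k)⁻¹ • (w k - x)) atTop (𝓝 d)) :
    Tendsto (fun k => (t k)⁻¹ • (F (w k) - F x)) atTop (𝓝 (F' x d)) := by
  obtain ⟨L, U, hU, hL⟩ := hLip x
  have hwx : Tendsto w atTop (𝓝 x) := by
    have := (ht0.smul hw).const_add x
    simp only [zero_smul, add_zero] at this
    refine this.congr fun k => ?_
    rw [smul_smul, mul_inv_cancel₀ (ht k).ne', one_smul, add_sub_cancel]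
  have hvx : Tendsto (fun k => x + t k • d) atTop (𝓝 x) := by
    have := (ht0.smul_const d).const_add x
    simpa using this
  have hA : Tendsto (fun k => (t k)⁻¹ • (F (x + t k • d) - F x)) atTop (𝓝 (F' x d)) :=
    (hF' x d).comp (tendsto_nhdsWithin_iff.2 ⟨ht0, Eventually.of_forall ht⟩)
  have hB : Tendsto (fun k => (t k)⁻¹ • (F (w k) - F (x + t k • d))) atTop (𝓝 0) := by
    have hz : Tendsto (fun k => (L : ℝ) * ‖(t k)⁻¹ • (w k - x) - d‖) atTop (𝓝 0) := by
      have := ((hw.sub_const d).norm).const_mul (L : ℝ)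
      simpa using this
    refine squeeze_zero_norm' ?_ hz
    filter_upwards [hwx hU, hvx hU] with k h1 h2
    have h3 := hL.norm_sub_le h1 h2
    have h4 : w k - (x + t k • d) = t k • ((t k)⁻¹ • (w k - x) - d) := by
      rw [smul_sub, smul_smul, mul_inv_cancel₀ (ht k).ne', one_smul]; abel
    rw [h4, norm_smul, Real.norm_of_nonneg (ht k).le] at h3
    rw [norm_smul, norm_inv, Real.norm_of_nonneg (ht k).le, inv_mul_le_iff₀ (ht k)]
    linarith
  have := hA.add hB
  rw [add_zero] at this
  refine this.congr fun k => ?_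
  rw [← smul_add]
  congr 1
  abel

/-- Changing the multiplier in a limiting subgradient of the scalarization. -/
lemma change_mult {n l : ℕ} (F : Eu n → Eu l) (hc : Continuous F) (L : ℝ) (hL0 : 0 ≤ L)
    (U : Set (Eu n)) (hUo : IsOpen U) (hL : ∀ a ∈ U, ∀ b ∈ U, ‖F a - F b‖ ≤ L * ‖a - b‖)
    (x : Eu n) (hx : x ∈ U) (lam mu : Eu l) (ξ : Eu n) (hξ : ξ ∈ scalSubdiff F mu x)
    {ρ : ℝ} (hρ : 0 < ρ) :
    ∃ y ξ', ‖y - x‖ ≤ ρ ∧ ‖ξ' - ξ‖ ≤ ρ + 2 * (‖mu - lam‖ * L) ∧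
      pl2 ξ' (-1) ∈ regNormal (epigraphSet (fun y => ⟪lam, F y⟫)) (pl2 y ⟪lam, F y⟫) := by
  obtain ⟨_, xk, ηk, h1, h2, h3⟩ := hξ
  have e1 : ∀ k, ∃ a b, xk k = pl2 a b := fun k => pl2_surj _
  have e2 : ∀ k, ∃ a b, ηk k = pl2 a b := fun k => pl2_surj _
  choose zk αk hz using e1
  choose ξk sk hs using e2
  obtain rfl : xk = fun k => pl2 (zk k) (αk k) := funext hz
  obtain rfl : ηk = fun k => pl2 (ξk k) (sk k) := funext hs
  obtain ⟨hzt, -⟩ := fst_tendsto h1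
  obtain ⟨hξt, hst⟩ := fst_tendsto h2
  have hinv : Tendsto (fun k => (-sk k)⁻¹ • ξk k) atTop (𝓝 ξ) := by
    have := (hst.neg.inv₀ (by norm_num)).smul hξt
    simpa using this
  have q1 : ∀ᶠ k in atTop, zk k ∈ U := hzt (hUo.mem_nhds hx)
  have q2 : ∀ᶠ k in atTop, sk k < 0 := hst.eventually_lt_const (by norm_num)
  have q3 := Metric.tendsto_nhds.1 hzt (ρ / 2) (by positivity)
  have q4 := Metric.tendsto_nhds.1 hinv (ρ / 2) (by positivity)
  obtain ⟨k, k1, k2, k3, k4⟩ := (q1.and (q2.and (q3.and q4))).exists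
  rw [dist_eq_norm] at k3 k4
  have hk := h3 k
  have hk' : pl2 (ξk k) (-(-sk k)) ∈ regNormal (epigraphSet (fun y => ⟪mu, F y⟫))
      (pl2 (zk k) (αk k)) := by simpa using hk
  have hfr := frechet_of_reg _ _ _ _ _ (neg_pos.2 k2) hk' (ε := ρ / 4) (by positivity)
  obtain ⟨y, ξ', y1, y2, y3⟩ := fuzzy (fun y => ⟪lam, F y⟫) (by fun_prop) (zk k)
    ((-sk k)⁻¹ • ξk k) (ρ / 4 + ‖mu - lam‖ * L) (by positivity) (by
      filter_upwards [hfr, hUo.mem_nhds k1] with w w1 w2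
      have w3 := hL w w2 _ k1
      have w4 := real_inner_le_norm (mu - lam) (F w - F (zk k))
      have w5 := mul_le_mul_of_nonneg_left w3 (norm_nonneg (mu - lam))
      simp only [inner_sub_left, inner_sub_right] at w4
      simp only [inner_sub_right] at w1 ⊢
      nlinarith) (ρ := ρ / 2) (by positivity)
  refine ⟨y, ξ', ?_, ?_, y3⟩
  · have := norm_sub_le_norm_sub_add_norm_sub y (zk k) x
    linarith
  · have := norm_sub_le_norm_sub_add_norm_sub ξ' ((-sk k)⁻¹ • ξk k) ξ
    linarith

end Helpers

/-- A point admitting a directionally AM-stationary sequence with bounded multipliers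
is M-stationary in that direction. -/
theorem stmt12 {n l : ℕ}
    (f : Eu n → ℝ) (hf : ContDiff ℝ 1 f)
    (F : Eu n → Eu l) (F' : Eu n → Eu n → Eu l)
    (hLip : LocallyLipschitz F) (hF' : IsDirDeriv F F')
    (Γ : Set (Eu l)) (hΓne : Γ.Nonempty) (hΓcl : IsClosed Γ)
    (x : Eu n) (hfeas : F x ∈ Γ)
    (d : Eu n) (hd : d ∈ critCone f F F' Γ x) (hd1 : ‖d‖ = 1)
    (xk : ℕ → Eu n) (lamk δk : ℕ → Eu l) (εk : ℕ → Eu n)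
    (hAM : AMSeqDir f F Γ x xk lamk δk εk d)
    (hbd : ∃ M : ℝ, ∀ k, ‖lamk k‖ ≤ M) :
    MStatDir f F F' Γ x d := by
  obtain ⟨⟨hS, hN, hx, hδ, hε⟩, hne, hdir, hδ', -, -⟩ := hAM
  obtain ⟨M, hM⟩ := hbd
  obtain ⟨lam, _, g, hg, hlam⟩ := (isCompact_closedBall (0 : Eu l) M).tendsto_subseq
    (x := lamk) (fun k => by simpa using hM k)
  have hgt := hg.tendsto_atTop
  set t : ℕ → ℝ := fun k => ‖xk (g k) - x‖ with htdef
  have ht : ∀ k, 0 < t k := fun k => norm_pos_iff.2 (sub_ne_zero.2 (hne _))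
  have ht0 : Tendsto t atTop (𝓝 0) := by
    have := ((hx.comp hgt).sub_const x).norm
    simpa using this
  have hdir' : Tendsto (fun k => (t k)⁻¹ • (xk (g k) - x)) atTop (𝓝 d) := hdir.comp hgt
  have hδ2 : Tendsto (fun k => (t k)⁻¹ • δk (g k)) atTop (𝓝 0) := hδ'.comp hgt
  set o : ℕ → ℝ := fun k => 1 / ((k : ℝ) + 1) with hodef
  have ho : ∀ k, 0 < o k := fun k => by positivity
  have ho0 : Tendsto o atTop (𝓝 0) := tendsto_one_div_add_atTop_nhds_zero_nat
  have hto : ∀ k, 0 < min (t k * o k) (o k) := fun k => lt_min (mul_pos (ht k) (ho k)) (ho k)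
  have small : ∀ {m : ℕ} (a b : ℕ → Eu m), (∀ᶠ k in atTop, ‖a k - b k‖ ≤ t k * o k) →
      Tendsto (fun k => (t k)⁻¹ • (a k - b k)) atTop (𝓝 0) := by
    intro m a b hab
    refine squeeze_zero_norm' ?_ ho0
    filter_upwards [hab] with k hk
    rw [norm_smul, norm_inv, Real.norm_of_nonneg (ht k).le, inv_mul_le_iff₀ (ht k)]
    exact hk
  refine ⟨lam, ?_, ?_⟩
  · obtain ⟨L, V, hV, hLV⟩ := hLip x
    obtain ⟨U, hUV, hUo, hxU⟩ := _root_.mem_nhds_iff.1 hV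
    have hL : ∀ a ∈ U, ∀ b ∈ U, ‖F a - F b‖ ≤ (L : ℝ) * ‖a - b‖ := fun a ha b hb =>
      hLV.norm_sub_le (hUV ha) (hUV hb)
    have hev : ∀ᶠ k in atTop, xk (g k) ∈ U := (hx.comp hgt) (hUo.mem_nhds hxU)
    have hex : ∀ k, ∃ p : Eu n × Eu n, xk (g k) ∈ U → (‖p.1 - xk (g k)‖ ≤ min (t k * o k) (o k) ∧
        ‖p.2 - (εk (g k) - gradient f (xk (g k)))‖ ≤
          min (t k * o k) (o k) + 2 * (‖lamk (g k) - lam‖ * L) ∧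
        pl2 p.2 (-1) ∈ regNormal (epigraphSet (fun y => ⟪lam, F y⟫)) (pl2 p.1 ⟪lam, F p.1⟫)) := by
      intro k
      by_cases hk : xk (g k) ∈ U
      · obtain ⟨y, ξ', h⟩ := change_mult F hLip.continuous L L.2 U hUo hL _ hk lam _ _
          (hS (g k)) (hto k)
        exact ⟨(y, ξ'), fun _ => h⟩
      · exact ⟨(0, 0), fun h => absurd h hk⟩
    choose p hp using hex
    have hpx : Tendsto (fun k => (t k)⁻¹ • ((p k).1 - x)) atTop (𝓝 d) := by
      have h1 := small (fun k => (p k).1) (fun k => xk (g k)) (by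
        filter_upwards [hev] with k hk using (hp k hk).1.trans (min_le_left _ _))
      have := h1.add hdir'
      rw [zero_add] at this
      refine this.congr fun k => ?_
      rw [← smul_add, sub_add_sub_cancel]
    have hFx := hadamard F F' hLip hF' x d _ t ht ht0 hpx
    have hgrad : Tendsto (fun k => εk (g k) - gradient f (xk (g k))) atTop
        (𝓝 (-gradient f x)) := by
      have hcg : Continuous (gradient f) :=
        (InnerProductSpace.toDual ℝ (Eu n)).symm.continuous.comp
          (hf.continuous_fderiv (by norm_num))
      have := (hε.comp hgt).sub ((hcg.tendsto x).comp (hx.comp hgt))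
      rw [zero_sub] at this
      exact this
    have hlam0 : Tendsto (fun k => ‖lamk (g k) - lam‖) atTop (𝓝 0) := by
      have := (hlam.sub_const lam).norm
      simpa using this
    have hξ : Tendsto (fun k => (p k).2) atTop (𝓝 (-gradient f x)) := by
      have h0 : Tendsto (fun k => (p k).2 - (εk (g k) - gradient f (xk (g k)))) atTop (𝓝 0) := by
        have hb : Tendsto (fun k => o k + 2 * (‖lamk (g k) - lam‖ * L)) atTop (𝓝 0) := by
          have := ho0.add ((hlam0.mul_const (L : ℝ)).const_mul 2)
          simpa using this
        refine squeeze_zero_norm' ?_ hb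
        filter_upwards [hev] with k hk
        have h1 := (hp k hk).2.1
        have h2 := min_le_right (t k * o k) (o k)
        linarith
      have := h0.add hgrad
      rw [zero_add] at this
      refine this.congr fun k => ?_
      rw [sub_add_cancel]
    refine dirLimNormal_of_eventually (le_refl ⟪lam, F x⟫)
      (fun k => pl2 ((t k)⁻¹ • ((p k).1 - x)) ⟪lam, (t k)⁻¹ • (F (p k).1 - F x)⟫) t
      (fun k => pl2 (p k).2 (-1)) (pl2_tendsto hpx (Tendsto.inner tendsto_const_nhds hFx)) ht ht0
      (pl2_tendsto hξ tendsto_const_nhds) ?_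
    filter_upwards [hev] with k hk
    have h1 := (hp k hk).2.2
    rw [pl2_add_smul, ← real_inner_smul_right, smul_smul, smul_smul,
      mul_inv_cancel₀ (ht k).ne', one_smul, one_smul, ← inner_add_right, add_sub_cancel,
      add_sub_cancel]
    exact h1
  · have hex : ∀ k, ∃ p : Eu l × Eu l, ‖p.1 - (F (xk (g k)) - δk (g k))‖ ≤ min (t k * o k) (o k) ∧
        ‖p.2 - lamk (g k)‖ ≤ min (t k * o k) (o k) ∧ p.2 ∈ regNormal Γ p.1 := by
      intro k
      obtain ⟨y, η', h⟩ := limNormal_approx (hN (g k)) (hto k)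
      exact ⟨(y, η'), h⟩
    choose p hp using hex
    have hFx := hadamard F F' hLip hF' x d _ t ht ht0 hdir'
    refine dirLimNormal_of_eventually hfeas (fun k => (t k)⁻¹ • ((p k).1 - F x)) t
      (fun k => (p k).2) ?_ ht ht0 ?_ (Eventually.of_forall fun k => ?_)
    · have h1 := small (fun k => (p k).1) (fun k => F (xk (g k)) - δk (g k))
        (Eventually.of_forall fun k => (hp k).1.trans (min_le_left _ _))
      have := (h1.add hFx).sub hδ2
      rw [zero_add, sub_zero] at this
      refine this.congr fun k => ?_
      rw [← smul_add, ← smul_sub]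
      congr 1
      abel
    · have h0 : Tendsto (fun k => (p k).2 - lamk (g k)) atTop (𝓝 0) :=
        squeeze_zero_norm (fun k => (hp k).2.1.trans (min_le_right _ _)) ho0
      have := h0.add hlam
      rw [zero_add] at this
      refine this.congr fun k => ?_
      simp
    · rw [smul_smul, mul_inv_cancel₀ (ht k).ne', one_smul, add_sub_cancel]
      exact (hp k).2.2


end
end

section
/- Let x̄ be a local minimizer of (P) and let d ∈ Ĉ(x̄) ∩ 𝕊 be chosen arbitrarily. Then there exists an AM-stationary sequence {(x^k, λ^k, δ^k, ε^k)} w.r.t. x̄ in direction d such that ‖δ^k‖ ‖λ^k‖ / ‖x^k − x̄‖ → 0. If, additionally, MSCQ(d) holds at x̄, then such a sequence exists for which moreover {λ^k} is bounded. -/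
open Filter Topology Metric Set
open scoped RealInnerProductSpace Pointwise

noncomputable section

theorem regNormal_sub_lim {H : Type*} [NormedAddCommGroup H] [InnerProductSpace ℝ H]
    {Ω : Set H} {x η : H} (h : η ∈ regNormal Ω x) : η ∈ limNormal Ω x :=
  ⟨h.1, fun _ => x, fun _ => η, tendsto_const_nhds, tendsto_const_nhds, fun _ => h⟩

theorem prox_normal {H : Type*} [NormedAddCommGroup H] [InnerProductSpace ℝ H]
    {Ω : Set H} {p y : H} (hp : p ∈ Ω) (h : ∀ q ∈ Ω, ‖y - p‖ ≤ ‖y - q‖) {m : ℝ} (hm : 0 < m) :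
    m • (y - p) ∈ regNormal Ω p := by
  refine ⟨hp, ?_⟩
  rintro v ⟨_, dk, tk, hdk, htk, htk0, hmem⟩
  rw [inner_smul_right]
  suffices h2 : ⟪v, y - p⟫ ≤ 0 from mul_nonpos_of_nonneg_of_nonpos hm.le h2
  have h1 : ∀ k, 2 * ⟪dk k, y - p⟫ ≤ tk k * ‖dk k‖ ^ 2 := by
    intro k
    have h3 := h _ (hmem k)
    have h4 : y - (p + tk k • dk k) = (y - p) - tk k • dk k := by abel
    rw [h4] at h3
    have h5 := pow_le_pow_left₀ (norm_nonneg _) h3 2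
    rw [norm_sub_sq_real (y - p), inner_smul_right, norm_smul, mul_pow, Real.norm_eq_abs, sq_abs,
      real_inner_comm] at h5
    have := htk k
    by_contra hc
    push Not at hc
    nlinarith
  have h6 : Tendsto (fun k => 2 * ⟪dk k, y - p⟫) atTop (𝓝 (2 * ⟪v, y - p⟫)) :=
    (hdk.inner tendsto_const_nhds).const_mul 2
  have h7 : Tendsto (fun k => tk k * ‖dk k‖ ^ 2) atTop (𝓝 (0 * ‖v‖ ^ 2)) :=
    htk0.mul (hdk.norm.pow 2)
  have := le_of_tendsto_of_tendsto' h6 h7 h1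
  linarith

theorem diff_quot {n : ℕ} {G : Eu n → ℝ} {g u v : Eu n} (hG : HasGradientAt G g u)
    {dk : ℕ → Eu n} {tk : ℕ → ℝ} (hdk : Tendsto dk atTop (𝓝 v)) (htk : ∀ k, 0 < tk k)
    (htk0 : Tendsto tk atTop (𝓝 0)) :
    Tendsto (fun k => (tk k)⁻¹ * (G (u + tk k • dk k) - G u)) atTop (𝓝 ⟪g, v⟫) := by
  have h1 := hG.hasFDerivAt.hasFDerivWithinAt (s := univ)
  have h0 : Tendsto (fun k => tk k • dk k) atTop (𝓝 0) := by simpa using htk0.smul hdk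
  have h2 := h1.lim (α := ℕ) (l := atTop) (c := fun k => (tk k)⁻¹) (d := fun k => tk k • dk k)
    (v := v) h0 (by simp) (by
      refine hdk.congr fun k => ?_
      rw [smul_smul, inv_mul_cancel₀ (htk k).ne', one_smul])
  simpa using h2

theorem subdiff_of_min {n : ℕ} {G φ : Eu n → ℝ} {g u : Eu n} (hG : HasGradientAt G g u)
    (hmin : ∀ᶠ v in 𝓝 u, G u + φ u ≤ G v + φ v) : -g ∈ limSubdiff φ u := by
  apply regNormal_sub_lim
  refine ⟨by simp [epigraphSet, pl2], ?_⟩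
  rintro w ⟨_, dk, tk, hdk, htk, htk0, hmem⟩
  have hw1 : Tendsto (fun k => (dk k).fst) atTop (𝓝 w.fst) :=
    ((WithLp.prod_continuous_ofLp 2 _ _).fst.tendsto w).comp hdk
  have hw2 : Tendsto (fun k => (dk k).snd) atTop (𝓝 w.snd) :=
    ((WithLp.prod_continuous_ofLp 2 _ _).snd.tendsto w).comp hdk
  have hi : ⟪w, pl2 (-g) (-1)⟫ = -⟪g, w.fst⟫ - w.snd := by
    rw [WithLp.prod_inner_apply]
    simp [pl2, real_inner_comm]
    ring
  rw [hi]
  have h0 : Tendsto (fun k => u + tk k • (dk k).fst) atTop (𝓝 u) := by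
    simpa using (htk0.smul hw1).const_add u
  have hq := diff_quot hG hw1 htk htk0
  have hle : ∀ᶠ k in atTop, -((tk k)⁻¹ * (G (u + tk k • (dk k).fst) - G u)) ≤ (dk k).snd := by
    filter_upwards [h0.eventually hmin] with k hk
    have h3 : φ (u + tk k • (dk k).fst) ≤ φ u + tk k * (dk k).snd := by
      simpa [epigraphSet, pl2] using hmem k
    have ht := htk k
    have : (tk k)⁻¹ * (-(tk k * (dk k).snd)) ≤ (tk k)⁻¹ * (G (u + tk k • (dk k).fst) - G u) := by
      apply mul_le_mul_of_nonneg_left _ (inv_pos.2 ht).le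
      linarith
    have h4 : (tk k)⁻¹ * (-(tk k * (dk k).snd)) = -(dk k).snd := by field_simp
    linarith
  have := le_of_tendsto_of_tendsto hq.neg hw2 hle
  linarith

theorem grad_sq {n l : ℕ} {F : Eu n → Eu l} (hLip : LocallyLipschitz F) (u : Eu n) :
    HasFDerivAt (fun v => ‖F v - F u‖ ^ 2) (0 : Eu n →L[ℝ] ℝ) u := by
  obtain ⟨K, t, ht, hK⟩ := hLip u
  rw [hasFDerivAt_iff_isLittleO]
  simp only [sub_self, norm_zero, zero_apply, sub_zero]
  have h1 : (fun v => F v - F u) =O[𝓝 u] (fun v => v - u) := by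
    apply Asymptotics.IsBigO.of_bound K
    filter_upwards [ht] with v hv
    simpa [dist_eq_norm] using hK.dist_le_mul v hv u (mem_of_mem_nhds ht)
  have h2 : (fun v => ‖F v - F u‖ ^ 2) =O[𝓝 u] (fun v => ‖v - u‖ ^ 2) := h1.norm_norm.pow 2
  have h3 : (fun v : Eu n => ‖v - u‖ ^ 2) =o[𝓝 u] (fun v => v - u) :=
    Asymptotics.isLittleO_pow_sub_sub u one_lt_two
  simpa using h2.trans_isLittleO h3

theorem stat_of_min {n l : ℕ} {f : Eu n → ℝ} (hf : ContDiff ℝ 1 f)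
    {F : Eu n → Eu l} (hLip : LocallyLipschitz F) {Γ : Set (Eu l)}
    {u z : Eu n} {p : Eu l} {c m : ℝ} (hm : 0 < m) (hp : p ∈ Γ)
    (hpd : infDist (F u) Γ = ‖F u - p‖)
    (hmin : ∀ᶠ v in 𝓝 u, f u + c * ‖u - z‖ ^ 2 + m / 2 * infDist (F u) Γ ^ 2
      ≤ f v + c * ‖v - z‖ ^ 2 + m / 2 * infDist (F v) Γ ^ 2) :
    -((2 * c) • (u - z)) - gradient f u ∈ scalSubdiff F (m • (F u - p)) u ∧
    m • (F u - p) ∈ limNormal Γ (F u - (F u - p)) := by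
  constructor
  · have hg1 : HasGradientAt f (gradient f u) u :=
      (hf.differentiable one_ne_zero u).hasGradientAt
    have hg2 : HasFDerivAt (fun v : Eu n => ‖v - z‖ ^ 2) (2 • innerSL ℝ (u - z)) u := by
      simpa using ((hasFDerivAt_id u).sub_const z).norm_sq
    have hG : HasGradientAt (fun v => f v + c * ‖v - z‖ ^ 2 + m / 2 * ‖F v - F u‖ ^ 2)
        (gradient f u + (2 * c) • (u - z)) u := by
      rw [hasGradientAt_iff_hasFDerivAt]
      have := (hg1.hasFDerivAt.add (hg2.const_mul c)).add ((grad_sq hLip u).const_mul (m / 2))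
      have he : (InnerProductSpace.toDual ℝ (Eu n)) (gradient f u + (2 * c) • (u - z)) =
          (InnerProductSpace.toDual ℝ (Eu n)) (gradient f u) + c • 2 • (innerSL ℝ) (u - z)
            + (m / 2) • (0 : Eu n →L[ℝ] ℝ) := by
        ext v
        simp [inner_add_left, inner_smul_left]
        ring
      rw [he]
      exact this
    have := subdiff_of_min (φ := fun y => ⟪m • (F u - p), F y⟫) hG (by
      filter_upwards [hmin] with v hv
      have h1 : infDist (F v) Γ ≤ ‖F v - p‖ := by
        rw [← dist_eq_norm]; exact infDist_le_dist_of_mem hp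
      have h2 := pow_le_pow_left₀ infDist_nonneg h1 2
      have h3 : F v - p = (F u - p) + (F v - F u) := by abel
      rw [h3, norm_add_sq_real, inner_sub_right] at h2
      rw [hpd] at hv
      simp only [inner_smul_left, sub_self, norm_zero]
      simp only [conj_trivial]
      have h4 := mul_le_mul_of_nonneg_left h2 (by positivity : 0 ≤ m / 2)
      linarith)
    have he : -((2 * c) • (u - z)) - gradient f u = -(gradient f u + (2 * c) • (u - z)) := by
      rw [neg_add]; abel
    rw [he]
    exact this
  · apply regNormal_sub_lim
    rw [sub_sub_cancel]
    apply prox_normal hp _ hm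
    intro q hq
    rw [← hpd, ← dist_eq_norm]
    exact infDist_le_dist_of_mem hq

theorem exists_pen {n l : ℕ} {f : Eu n → ℝ} (hf : Continuous f)
    {F : Eu n → Eu l} (hF : Continuous F) {Γ : Set (Eu l)} (hΓne : Γ.Nonempty)
    (hΓcl : IsClosed Γ) {x z : Eu n} {r c τ M0 : ℝ} (hc : 0 < c) (hτ : 0 < τ)
    (hmin : ∀ y ∈ closedBall x r, F y ∈ Γ → f x ≤ f y) (hz : z ∈ closedBall x r)
    (hzF : F z ∈ Γ) :
    ∃ m u p, 0 < m ∧ M0 ≤ m ∧ u ∈ closedBall x r ∧ p ∈ Γ ∧ infDist (F u) Γ = ‖F u - p‖ ∧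
      (∀ v ∈ closedBall x r, f u + c * ‖u - z‖ ^ 2 + m / 2 * infDist (F u) Γ ^ 2
      ≤ f v + c * ‖v - z‖ ^ 2 + m / 2 * infDist (F v) Γ ^ 2) ∧ f x - τ ≤ f u := by
  have hB : IsCompact (closedBall x r) := isCompact_closedBall x r
  have hD : Continuous fun v => infDist (F v) Γ := (continuous_infDist_pt Γ).comp hF
  obtain ⟨y0, hy0, hy0m⟩ := hB.exists_isMinOn ⟨z, hz⟩ hf.continuousOn
  have hα : ∃ α > 0, ∀ v ∈ closedBall x r, f v ≤ f x - τ → α ≤ infDist (F v) Γ := by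
    by_cases hne : (closedBall x r ∩ {v | f v ≤ f x - τ}).Nonempty
    · have hK : IsCompact (closedBall x r ∩ {v | f v ≤ f x - τ}) :=
        hB.inter_right (isClosed_le hf continuous_const)
      obtain ⟨w, hw, hwm⟩ := hK.exists_isMinOn hne hD.continuousOn
      refine ⟨infDist (F w) Γ, ?_, fun v hv hv2 => hwm ⟨hv, hv2⟩⟩
      refine lt_of_le_of_ne infDist_nonneg fun h => ?_
      have := (hΓcl.mem_iff_infDist_zero hΓne).2 h.symm
      have h2 := hmin w hw.1 this
      have h3 : f w ≤ f x - τ := hw.2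
      linarith
    · exact ⟨1, one_pos, fun v hv hv2 => (hne ⟨v, hv, hv2⟩).elim⟩
  obtain ⟨α, hα, hαm⟩ := hα
  have hzy : f y0 ≤ f z := hy0m hz
  set m := max M0 (2 * (f z - f y0 + 1) / α ^ 2) with hmdef
  have hm2 : 2 * (f z - f y0 + 1) / α ^ 2 ≤ m := le_max_right _ _
  have hm : 0 < m := lt_of_lt_of_le (by
    have : 0 < f z - f y0 + 1 := by linarith
    positivity) hm2
  have hm3 : f z - f y0 + 1 ≤ m / 2 * α ^ 2 := by
    rw [div_le_iff₀ (by positivity)] at hm2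
    linarith
  obtain ⟨u, hu, hum⟩ := hB.exists_isMinOn ⟨z, hz⟩
    (f := fun v => f v + c * ‖v - z‖ ^ 2 + m / 2 * infDist (F v) Γ ^ 2)
    (by fun_prop)
  obtain ⟨p, hp, hpd⟩ := hΓcl.exists_infDist_eq_dist hΓne (F u)
  refine ⟨m, u, p, hm, le_max_left _ _, hu, hp, by rw [hpd, dist_eq_norm],
    fun v hv => hum hv, ?_⟩
  by_contra hcon
  push Not at hcon
  have h1 := hαm u hu hcon.le
  have h2 := pow_le_pow_left₀ hα.le h1 2
  have h3 : f u + c * ‖u - z‖ ^ 2 + m / 2 * infDist (F u) Γ ^ 2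
      ≤ f z + c * ‖z - z‖ ^ 2 + m / 2 * infDist (F z) Γ ^ 2 := hum hz
  rw [infDist_zero_of_mem hzF] at h3
  simp only [sub_self, norm_zero] at h3
  have h4 : f y0 ≤ f u := hy0m hu
  have h5 : 0 ≤ c * ‖u - z‖ ^ 2 := by positivity
  have h6 := mul_le_mul_of_nonneg_left h2 (by positivity : 0 ≤ m / 2)
  nlinarith

theorem pen_step {n l : ℕ} {f : Eu n → ℝ} (hf : ContDiff ℝ 1 f)
    {F : Eu n → Eu l} (hLip : LocallyLipschitz F) {Γ : Set (Eu l)} (hΓne : Γ.Nonempty)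
    (hΓcl : IsClosed Γ) {x z : Eu n} {r t s L : ℝ} (hr : 0 < r) (ht : 0 < t) (hs : 0 < s) (hL : 0 ≤ L)
    (hmin : ∀ y ∈ closedBall x r, F y ∈ Γ → f x ≤ f y)
    (hfL : ∀ y ∈ closedBall x r, ∀ y' ∈ closedBall x r, f y - f y' ≤ L * ‖y - y'‖)
    (hz : ‖z - x‖ ≤ r / 4) (hts : 2 * t * s ≤ r / 4)
    (hzF : F z ∈ Γ) (hfz : f z ≤ f x + t * s ^ 4) :
    ∃ (u : Eu n) (lam δ : Eu l) (ε : Eu n) (m : ℝ), 0 < m ∧ lam = m • δ ∧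
      ε - gradient f u ∈ scalSubdiff F lam u ∧ lam ∈ limNormal Γ (F u - δ) ∧
      ‖u - z‖ ≤ 2 * t * s ∧ ‖δ‖ ≤ 2 * t * s ^ 2 ∧ ‖δ‖ * ‖lam‖ ≤ 4 * t * s ^ 4 ∧
      ‖ε‖ ≤ 4 * s ^ 3 ∧
      (∀ κ > 0, infDist u (F ⁻¹' Γ) ≤ κ * infDist (F u) Γ → κ * (2 * t * s ^ 2) ≤ r / 4 →
        ‖lam‖ ≤ 2 * κ * (L + 4 * s ^ 3 + 2 * κ * s ^ 4)) := by
  have hc : 0 < s ^ 2 / t := by positivity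
  have hzB : z ∈ closedBall x r := by
    rw [mem_closedBall, dist_eq_norm]; linarith
  obtain ⟨m, u, p, hm, hm0, hu, hp, hpd, hmn, hfu⟩ := exists_pen (M0 := 1 / t) hf.continuous
    hLip.continuous hΓne hΓcl hc (show 0 < t * s ^ 4 by positivity) hmin hzB hzF
  set c := s ^ 2 / t with hcdef
  have hct : c * t = s ^ 2 := by rw [hcdef]; field_simp
  have hmt : 1 ≤ m * t := by rwa [div_le_iff₀ ht] at hm0
  have hz1 := hmn z hzB
  rw [infDist_zero_of_mem hzF, hpd] at hz1
  simp only [sub_self, norm_zero] at hz1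
  have hA : c * ‖u - z‖ ^ 2 + m / 2 * ‖F u - p‖ ^ 2 ≤ 2 * t * s ^ 4 := by nlinarith
  have hA1 : c * ‖u - z‖ ^ 2 ≤ 2 * t * s ^ 4 := by
    have : 0 ≤ m / 2 * ‖F u - p‖ ^ 2 := by positivity
    linarith
  have hA2 : m * ‖F u - p‖ ^ 2 ≤ 4 * t * s ^ 4 := by
    have : 0 ≤ c * ‖u - z‖ ^ 2 := by positivity
    linarith
  have huz : ‖u - z‖ ≤ 2 * t * s := by
    refine (sq_le_sq₀ (norm_nonneg _) (by positivity)).1 ?_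
    have h1 : s ^ 2 * ‖u - z‖ ^ 2 ≤ s ^ 2 * (2 * t ^ 2 * s ^ 2) := by
      calc s ^ 2 * ‖u - z‖ ^ 2 = t * (c * ‖u - z‖ ^ 2) := by rw [← hct]; ring
        _ ≤ t * (2 * t * s ^ 4) := by gcongr
        _ = _ := by ring
    have h2 := le_of_mul_le_mul_left h1 (by positivity)
    have : 0 ≤ t ^ 2 * s ^ 2 := by positivity
    nlinarith
  have hδ : ‖F u - p‖ ≤ 2 * t * s ^ 2 := by
    refine (sq_le_sq₀ (norm_nonneg _) (by positivity)).1 ?_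
    calc ‖F u - p‖ ^ 2 ≤ (m * t) * ‖F u - p‖ ^ 2 := le_mul_of_one_le_left (by positivity) hmt
      _ = t * (m * ‖F u - p‖ ^ 2) := by ring
      _ ≤ t * (4 * t * s ^ 4) := by gcongr
      _ = _ := by ring
  have hcu : c * ‖u - z‖ ≤ 2 * s ^ 3 := by
    calc c * ‖u - z‖ ≤ c * (2 * t * s) := by gcongr
      _ = (c * t) * (2 * s) := by ring
      _ = _ := by rw [hct]; ring
  have hcδ : c * ‖F u - p‖ ≤ 2 * s ^ 4 := by
    calc c * ‖F u - p‖ ≤ c * (2 * t * s ^ 2) := by gcongr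
      _ = (c * t) * (2 * s ^ 2) := by ring
      _ = _ := by rw [hct]; ring
  have hux : ‖u - x‖ ≤ r / 2 := by
    calc ‖u - x‖ = ‖(u - z) + (z - x)‖ := by congr 1; abel
      _ ≤ ‖u - z‖ + ‖z - x‖ := norm_add_le _ _
      _ ≤ _ := by linarith
  obtain ⟨hst1, hst2⟩ := stat_of_min hf hLip (u := u) (z := z) (c := c) hm hp hpd (by
    have : closedBall x r ∈ 𝓝 u := by
      apply mem_of_superset (isOpen_ball.mem_nhds _) (ball_subset_closedBall (x := x) (ε := r))
      rw [mem_ball, dist_eq_norm]; linarith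
    filter_upwards [this] with v hv using hmn v hv)
  refine ⟨u, m • (F u - p), F u - p, _, m, hm, rfl, hst1, hst2, huz, hδ, ?_, ?_, ?_⟩
  · rw [norm_smul, Real.norm_eq_abs, abs_of_pos hm]
    linarith
  · rw [norm_neg, norm_smul, Real.norm_eq_abs, abs_of_pos (by positivity)]
    linarith
  · intro κ hκ hdist hκr
    rw [hpd] at hdist
    obtain ⟨v, hv, hvd⟩ := (hΓcl.preimage hLip.continuous).exists_infDist_eq_dist ⟨z, hzF⟩ u
    rw [hvd, dist_eq_norm] at hdist
    have hvF : F v ∈ Γ := hv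
    have hvu : ‖v - u‖ ≤ κ * ‖F u - p‖ := by rwa [norm_sub_rev]
    have hvB : v ∈ closedBall x r := by
      rw [mem_closedBall, dist_eq_norm]
      calc ‖v - x‖ = ‖(v - u) + (u - x)‖ := by congr 1; abel
        _ ≤ ‖v - u‖ + ‖u - x‖ := norm_add_le _ _
        _ ≤ κ * (2 * t * s ^ 2) + r / 2 := by
          have : κ * ‖F u - p‖ ≤ κ * (2 * t * s ^ 2) := by gcongr
          linarith
        _ ≤ r := by linarith
    have h1 := hmn v hvB
    rw [infDist_zero_of_mem hvF, hpd] at h1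
    have h2 := hfL v hvB u hu
    have h3 : ‖v - z‖ ≤ ‖v - u‖ + ‖u - z‖ := by
      calc ‖v - z‖ = ‖(v - u) + (u - z)‖ := by congr 1; abel
        _ ≤ _ := norm_add_le _ _
    have h4 : c * ‖v - z‖ ^ 2 ≤ c * (‖v - u‖ + ‖u - z‖) ^ 2 := by gcongr
    rw [norm_smul, Real.norm_eq_abs, abs_of_pos hm]
    have hD := norm_nonneg (F u - p)
    have hE := norm_nonneg (v - u)
    set D := ‖F u - p‖
    set E := ‖v - u‖
    set W := ‖u - z‖
    have h5 : m / 2 * D ^ 2 ≤ E * (L + 2 * (c * W) + c * E) := by nlinarith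
    have h6 : c * E ≤ κ * (2 * s ^ 4) := by
      calc c * E ≤ c * (κ * D) := by gcongr
        _ = κ * (c * D) := by ring
        _ ≤ _ := by gcongr
    have h7 : m / 2 * D ^ 2 ≤ E * (L + 4 * s ^ 3 + 2 * κ * s ^ 4) := by
      refine h5.trans ?_
      gcongr ?_ * ?_
      linarith
    set Q := L + 4 * s ^ 3 + 2 * κ * s ^ 4
    have hQ : 0 ≤ Q := by positivity
    rcases hD.eq_or_lt with h0 | h0
    · rw [← h0, mul_zero]; positivity
    · have h8 : m / 2 * D ^ 2 ≤ κ * D * Q := h7.trans (by gcongr)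
      have h9 : D * (m * D) ≤ D * (2 * κ * Q) := by linarith
      exact le_of_mul_le_mul_left h9 h0
/-- Existence of an AM-stationary sequence in any implicit critical unit direction at a
local minimizer, with vanishing `‖δ^k‖‖λ^k‖/‖x^k − x̄‖`, and bounded multipliers under
MSCQ(d). -/
theorem stmt13 {n l : ℕ}
    (f : Eu n → ℝ) (hf : ContDiff ℝ 1 f)
    (F : Eu n → Eu l) (F' : Eu n → Eu n → Eu l)
    (hLip : LocallyLipschitz F) (hF' : IsDirDeriv F F')
    (Γ : Set (Eu l)) (hΓne : Γ.Nonempty) (hΓcl : IsClosed Γ)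
    (x : Eu n) (hfeas : F x ∈ Γ) (hmin : IsLocalMinOn f (F ⁻¹' Γ) x)
    (d : Eu n) (hd : d ∈ implCritCone f F Γ x) (hd1 : ‖d‖ = 1) :
    ∃ (xk : ℕ → Eu n) (lamk δk : ℕ → Eu l) (εk : ℕ → Eu n),
      AMSeqDir f F Γ x xk lamk δk εk d ∧
      Tendsto (fun k => ‖δk k‖ * ‖lamk k‖ / ‖xk k - x‖) atTop (𝓝 0) ∧
      (MSCQdir F Γ x d → ∃ M : ℝ, ∀ k, ‖lamk k‖ ≤ M) := by
  obtain ⟨hd0, _, dk, tk, hdk, htk, htk0, hmem⟩ := hd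
  -- a radius on which everything is controlled
  obtain ⟨K, V, hV, hK⟩ := hf.locallyLipschitz x
  have hmin' : ∀ᶠ y in 𝓝 x, F y ∈ Γ → f x ≤ f y := by
    have h : ∀ᶠ y in 𝓝[F ⁻¹' Γ] x, f x ≤ f y := hmin
    rw [eventually_nhdsWithin_iff] at h
    exact h
  obtain ⟨r, hr, hrB⟩ := nhds_basis_closedBall.mem_iff.1 (inter_mem hV hmin')
  have hmin2 : ∀ y ∈ closedBall x r, F y ∈ Γ → f x ≤ f y := fun y hy => (hrB hy).2
  have hfL : ∀ y ∈ closedBall x r, ∀ y' ∈ closedBall x r, f y - f y' ≤ (K : ℝ) * ‖y - y'‖ := by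
    intro y hy y' hy'
    have h := hK.dist_le_mul y (hrB hy).1 y' (hrB hy').1
    rw [Real.dist_eq, dist_eq_norm] at h
    exact (le_abs_self _).trans h
  -- the scale `s`
  have hq := diff_quot (hf.differentiable one_ne_zero x).hasGradientAt hdk htk htk0
  set a : ℕ → ℝ := fun k => max 0 ((tk k)⁻¹ * (f (x + tk k • dk k) - f x)) + tk k with ha
  have ha0 : ∀ k, 0 < a k := fun k => add_pos_of_nonneg_of_pos (le_max_left _ _) (htk k)
  have hat : Tendsto a atTop (𝓝 0) := by
    have h := (tendsto_const_nhds (x := (0 : ℝ))).max hq |>.add htk0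
    rw [max_eq_left hd0, add_zero] at h
    exact h
  set s : ℕ → ℝ := fun k => √√(a k) with hsdef
  have hs0 : ∀ k, 0 < s k := fun k => Real.sqrt_pos.2 (Real.sqrt_pos.2 (ha0 k))
  have hst : Tendsto s atTop (𝓝 0) := by
    simpa using hat.sqrt.sqrt
  have hs4 : ∀ k, s k ^ 4 = a k := by
    intro k
    have : s k ^ 4 = ((√√(a k)) ^ 2) ^ 2 := by rw [← pow_mul]
    rw [this, Real.sq_sqrt (Real.sqrt_nonneg _), Real.sq_sqrt (ha0 k).le]
  have hfz : ∀ k, f (x + tk k • dk k) ≤ f x + tk k * s k ^ 4 := by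
    intro k
    rw [hs4]
    have h1 : (tk k)⁻¹ * (f (x + tk k • dk k) - f x) ≤ a k :=
      (le_max_right _ _).trans (le_add_of_nonneg_right (htk k).le)
    rw [inv_mul_le_iff₀ (htk k)] at h1
    linarith
  have htd : Tendsto (fun k => ‖tk k • dk k‖) atTop (𝓝 0) := by
    simpa using (htk0.smul hdk).norm
  have hts : Tendsto (fun k => 2 * tk k * s k) atTop (𝓝 0) := by
    simpa using (htk0.const_mul 2).mul hst
  have hdn : Tendsto (fun k => ‖dk k‖ - 2 * s k) atTop (𝓝 1) := by
    simpa [hd1] using hdk.norm.sub (hst.const_mul 2)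
  obtain ⟨N, hN⟩ := eventually_atTop.1
    (((htd.eventually_le_const (show (0 : ℝ) < r / 4 by positivity)).and
      (hts.eventually_le_const (show (0 : ℝ) < r / 4 by positivity))).and
      (hdn.eventually_const_le (show (1 / 2 : ℝ) < 1 by norm_num)))
  have hstep := fun k => pen_step hf hLip hΓne hΓcl (z := x + tk (k + N) • dk (k + N)) hr
    (htk (k + N)) (hs0 (k + N)) K.coe_nonneg hmin2 hfL
    (by rw [add_sub_cancel_left]; exact (hN (k + N) (by omega)).1.1)
    (hN (k + N) (by omega)).1.2 (hmem (k + N)) (hfz (k + N))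
  have hsN : Tendsto (fun k => s (k + N)) atTop (𝓝 0) := hst.comp (tendsto_add_atTop_nat N)
  have htN : Tendsto (fun k => tk (k + N)) atTop (𝓝 0) := htk0.comp (tendsto_add_atTop_nat N)
  have hdN : Tendsto (fun k => dk (k + N)) atTop (𝓝 d) := hdk.comp (tendsto_add_atTop_nat N)
  have hnN : ∀ k, 1 / 2 ≤ ‖dk (k + N)‖ - 2 * s (k + N) := fun k => (hN (k + N) (by omega)).2
  have htN0 : ∀ k, 0 < tk (k + N) := fun k => htk _
  have hsN0 : ∀ k, 0 < s (k + N) := fun k => hs0 _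
  clear_value s
  generalize hTd : (fun k => tk (k + N)) = T at *
  generalize hSd : (fun k => s (k + N)) = S at *
  generalize hDd : (fun k => dk (k + N)) = D at *
  have hT' : ∀ k, tk (k + N) = T k := fun k => congrFun hTd k
  have hS' : ∀ k, s (k + N) = S k := fun k => congrFun hSd k
  have hD' : ∀ k, dk (k + N) = D k := fun k => congrFun hDd k
  simp only [hT', hS', hD'] at hstep hnN htN0 hsN0
  choose u lam δ ε m hm hlam hst1 hst2 huz hδ hδl hε hbd using hstep
  -- the normalized direction
  have hed : Tendsto (fun k => (T k)⁻¹ • (u k - x)) atTop (𝓝 d) := by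
    have h1 : Tendsto (fun k => (T k)⁻¹ • (u k - x) - D k) atTop (𝓝 0) := by
      refine squeeze_zero_norm (a := fun k => 2 * S k) (fun k => ?_) (by simpa using hsN.const_mul 2)
      have h2 : (T k)⁻¹ • (u k - x) - D k = (T k)⁻¹ • (u k - (x + T k • D k)) := by
        rw [← sub_sub, smul_sub _ (u k - x), smul_smul, inv_mul_cancel₀ (htN0 k).ne', one_smul]
      rw [h2, norm_smul, Real.norm_eq_abs, abs_of_pos (inv_pos.2 (htN0 k)),
        inv_mul_le_iff₀ (htN0 k)]
      linarith [huz k]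
    simpa using h1.add hdN
  have hux : ∀ k, T k / 2 ≤ ‖u k - x‖ := by
    intro k
    have h1 : ‖T k • D k‖ ≤ ‖u k - x‖ + ‖u k - (x + T k • D k)‖ := by
      calc ‖T k • D k‖ = ‖(u k - x) - (u k - (x + T k • D k))‖ := by congr 1; abel
        _ ≤ _ := norm_sub_le _ _
    rw [norm_smul, Real.norm_eq_abs, abs_of_pos (htN0 k)] at h1
    have h2 := mul_le_mul_of_nonneg_left (hnN k) (htN0 k).le
    linarith [huz k]
  have hux0 : ∀ k, 0 < ‖u k - x‖ := fun k => lt_of_lt_of_le (half_pos (htN0 k)) (hux k)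
  have huT : Tendsto (fun k => u k - x) atTop (𝓝 0) := by
    have h := htN.smul hed
    rw [zero_smul] at h
    refine h.congr fun k => ?_
    rw [smul_smul, mul_inv_cancel₀ (htN0 k).ne', one_smul]
  have hdir : Tendsto (fun k => ‖u k - x‖⁻¹ • (u k - x)) atTop (𝓝 d) := by
    have h := (hed.norm.inv₀ (by rw [hd1]; exact one_ne_zero)).smul hed
    rw [hd1, inv_one, one_smul] at h
    refine h.congr fun k => ?_
    have := (htN0 k).ne'
    rw [norm_smul, Real.norm_eq_abs, abs_of_pos (inv_pos.2 (htN0 k)), smul_smul]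
    congr 1
    have := (hux0 k).ne'
    field_simp
  have hS2 : Tendsto (fun k => 4 * S k ^ 2) atTop (𝓝 0) := by simpa using (hsN.pow 2).const_mul 4
  have hS3 : Tendsto (fun k => 4 * S k ^ 3) atTop (𝓝 0) := by simpa using (hsN.pow 3).const_mul 4
  have hS4 : Tendsto (fun k => 8 * S k ^ 4) atTop (𝓝 0) := by simpa using (hsN.pow 4).const_mul 8
  have hTS : Tendsto (fun k => 2 * T k * S k ^ 2) atTop (𝓝 0) := by
    simpa using (htN.const_mul 2).mul (hsN.pow 2)
  have hquot : Tendsto (fun k => ‖δ k‖ * ‖lam k‖ / ‖u k - x‖) atTop (𝓝 0) := by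
    refine squeeze_zero (fun k => by positivity) (fun k => ?_) hS4
    rw [div_le_iff₀ (hux0 k)]
    have := mul_le_mul_of_nonneg_left (hux k) (show 0 ≤ 8 * S k ^ 4 by positivity)
    linarith [hδl k]
  refine ⟨u, lam, δ, ε, ⟨⟨hst1, hst2, ?_, ?_, ?_⟩, ?_, hdir, ?_, ?_, ?_⟩, hquot, ?_⟩
  · simpa using huT.add_const x
  · exact squeeze_zero_norm hδ hTS
  · exact squeeze_zero_norm hε hS3
  · intro k hk
    have := hux0 k
    rw [hk, sub_self, norm_zero] at this
    exact lt_irrefl _ this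
  · refine squeeze_zero_norm (fun k => ?_) hS2
    rw [norm_smul, Real.norm_eq_abs, abs_of_pos (inv_pos.2 (hux0 k)), inv_mul_le_iff₀ (hux0 k)]
    have := mul_le_mul_of_nonneg_right (hux k) (show 0 ≤ 4 * S k ^ 2 by positivity)
    linarith [hδ k]
  · refine ⟨fun _ => 0, fun _ => le_rfl, tendsto_const_nhds, fun k => ?_⟩
    have : ‖δ k‖ • lam k - ‖lam k‖ • δ k = 0 := by
      rw [hlam k, norm_smul, Real.norm_eq_abs, abs_of_pos (hm k), smul_smul, mul_comm, sub_self]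
    rw [this]
    simp
  · obtain ⟨M, hM⟩ := hquot.bddAbove_range
    exact ⟨M, fun k => hM ⟨k, rfl⟩⟩
  · rintro ⟨ε₀, hε₀, δ₀, hδ₀, κ, hκ, hms⟩
    have hev : ∀ᶠ k in atTop, ‖lam k‖ ≤ 2 * κ * (K + 4 + 2 * κ) := by
      have e1 := (tendsto_zero_iff_norm_tendsto_zero.1 huT).eventually_le_const hε₀
      have e2 := (tendsto_iff_norm_sub_tendsto_zero.1 hdir).eventually_le_const hδ₀
      have e3 : ∀ᶠ k in atTop, κ * (2 * T k * S k ^ 2) ≤ r / 4 :=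
        (show Tendsto (fun k => κ * (2 * T k * S k ^ 2)) atTop (𝓝 0) by
          simpa using hTS.const_mul κ).eventually_le_const (by positivity)
      have e4 := hsN.eventually_le_const one_pos
      filter_upwards [e1, e2, e3, e4] with k h1 h2 h3 h4
      have hnb : u k - x ∈ dirNbhd d ε₀ δ₀ := by
        refine ⟨h1, ?_⟩
        rw [hd1, one_smul, mul_one]
        have h5 : u k - x - ‖u k - x‖ • d
            = ‖u k - x‖ • (‖u k - x‖⁻¹ • (u k - x) - d) := by
          rw [smul_sub, smul_smul, mul_inv_cancel₀ (hux0 k).ne', one_smul]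
        rw [h5, norm_smul, norm_norm, mul_comm]
        gcongr
      refine (hbd k κ hκ (hms _ hnb) h3).trans ?_
      have p3 : S k ^ 3 ≤ 1 := pow_le_one₀ (hsN0 k).le h4
      have p4 : S k ^ 4 ≤ 1 := pow_le_one₀ (hsN0 k).le h4
      have p5 : 2 * κ * S k ^ 4 ≤ 2 * κ := mul_le_of_le_one_right (by positivity) p4
      have : (K : ℝ) + 4 * S k ^ 3 + 2 * κ * S k ^ 4 ≤ K + 4 + 2 * κ := by linarith
      exact mul_le_mul_of_nonneg_left this (by positivity)
    obtain ⟨M, hM⟩ := (isBoundedUnder_of_eventually_le hev).bddAbove_range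
    exact ⟨M, fun k => hM ⟨k, rfl⟩⟩

end
end

section
/- Let x̄ be a local minimizer of (P) at which GACQ holds. Then x̄ is AM-stationary in direction d for all d ∈ C(x̄) ∩ 𝕊. -/
open Filter Topology Metric Set
open scoped RealInnerProductSpace Pointwise

noncomputable section

section Helpers

variable {H : Type*} [NormedAddCommGroup H] [InnerProductSpace ℝ H]

lemma aux_regNormal_limNormal {Ω : Set H} {x η : H} (h : η ∈ regNormal Ω x) :
    η ∈ limNormal Ω x :=
  ⟨h.1, fun _ => x, fun _ => η, tendsto_const_nhds, tendsto_const_nhds, fun _ => h⟩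

lemma aux_proj_normal {Ω : Set H} {p y : H} {ρ : ℝ} (hρ : 0 ≤ ρ) (hy : y ∈ Ω)
    (hmin : ∀ y' ∈ Ω, ‖p - y‖ ≤ ‖p - y'‖) : ρ • (p - y) ∈ limNormal Ω y := by
  apply aux_regNormal_limNormal
  refine ⟨hy, ?_⟩
  rintro v ⟨-, vk, tk, hv, ht, ht0, hmem⟩
  rw [inner_smul_right]
  have key : ∀ k, 2 * ⟪vk k, p - y⟫ ≤ tk k * ‖vk k‖ ^ 2 := by
    intro k
    have h1 := hmin _ (hmem k)
    have h2 : ‖p - y‖ ^ 2 ≤ ‖p - (y + tk k • vk k)‖ ^ 2 := by gcongr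
    have h3 : p - (y + tk k • vk k) = (p - y) - tk k • vk k := by abel
    rw [h3, norm_sub_sq_real (p - y) (tk k • vk k), inner_smul_right, norm_smul, Real.norm_of_nonneg (ht k).le,
      real_inner_comm] at h2
    have h4 : tk k * (2 * ⟪vk k, p - y⟫) ≤ tk k * (tk k * ‖vk k‖ ^ 2) := by nlinarith
    exact le_of_mul_le_mul_left h4 (ht k)
  have l1 : Tendsto (fun k => 2 * ⟪vk k, p - y⟫) atTop (𝓝 (2 * ⟪v, p - y⟫)) :=
    (hv.inner tendsto_const_nhds).const_mul 2
  have l2 : Tendsto (fun k => tk k * ‖vk k‖ ^ 2) atTop (𝓝 (0 * ‖v‖ ^ 2)) :=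
    ht0.mul (hv.norm.pow 2)
  have := le_of_tendsto_of_tendsto' l1 l2 key
  apply mul_nonpos_of_nonneg_of_nonpos hρ
  linarith

lemma aux_deriv_seq {G : H → ℝ} {G' : H →L[ℝ] ℝ} {x v : H} (hG : HasFDerivAt G G' x)
    {vk : ℕ → H} {tk : ℕ → ℝ} (hv : Tendsto vk atTop (𝓝 v)) (ht : ∀ k, 0 < tk k)
    (ht0 : Tendsto tk atTop (𝓝 0)) :
    Tendsto (fun k => (tk k)⁻¹ * (G (x + tk k • vk k) - G x)) atTop (𝓝 (G' v)) := by
  refine (hasFDerivWithinAt_univ.2 hG).lim (c := fun k => (tk k)⁻¹) (d := fun k => tk k • vk k)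
    ?_ (.of_forall fun _ ↦ mem_univ _) ?_
  · simpa using ht0.smul hv
  · refine hv.congr fun k => ?_
    rw [smul_smul, inv_mul_cancel₀ (ht k).ne', one_smul]

lemma aux_subdiff {φ G : H → ℝ} {G' : H →L[ℝ] ℝ} {x ξ : H} {K : ℝ} (hG : HasFDerivAt G G' x)
    (hG' : ∀ v, G' v = -⟪v, ξ⟫)
    (hmin : ∀ᶠ x' in 𝓝 x, φ x + G x ≤ φ x' + G x' + K * ‖x' - x‖ ^ 2) :
    ξ ∈ limSubdiff φ x := by
  apply aux_regNormal_limNormal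
  refine ⟨by simp [epigraphSet, pl2], ?_⟩
  rintro p ⟨-, pk, tk, hp, ht, ht0, hmem⟩
  have hv : Tendsto (fun k => (pk k).fst) atTop (𝓝 p.fst) :=
    ((WithLp.prod_continuous_ofLp 2 H ℝ).fst.tendsto p).comp hp
  have hr : Tendsto (fun k => (pk k).snd) atTop (𝓝 p.snd) :=
    ((WithLp.prod_continuous_ofLp 2 H ℝ).snd.tendsto p).comp hp
  have hle : ∀ k, φ (x + tk k • (pk k).fst) ≤ φ x + tk k * (pk k).snd := by
    intro k
    have := hmem k
    simpa [epigraphSet, pl2] using this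
  have hx' : Tendsto (fun k => x + tk k • (pk k).fst) atTop (𝓝 x) := by
    simpa using (ht0.smul hv).const_add x
  have key : ∀ᶠ k in atTop, 0 ≤ (pk k).snd +
      (tk k)⁻¹ * (G (x + tk k • (pk k).fst) - G x) + K * (tk k * ‖(pk k).fst‖ ^ 2) := by
    filter_upwards [hx'.eventually hmin] with k hk
    have h1 := hle k
    have htk := ht k
    rw [add_sub_cancel_left, norm_smul, Real.norm_of_nonneg htk.le] at hk
    have h2 : 0 ≤ tk k * ((pk k).snd +
      (tk k)⁻¹ * (G (x + tk k • (pk k).fst) - G x) + K * (tk k * ‖(pk k).fst‖ ^ 2)) := by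
      have e : tk k * ((pk k).snd +
        (tk k)⁻¹ * (G (x + tk k • (pk k).fst) - G x) + K * (tk k * ‖(pk k).fst‖ ^ 2))
        = tk k * (pk k).snd + (G (x + tk k • (pk k).fst) - G x)
          + K * (tk k * ‖(pk k).fst‖) ^ 2 := by
        field_simp
      rw [e]; linarith
    exact nonneg_of_mul_nonneg_right h2 htk
  have lim := (hr.add (aux_deriv_seq hG hv ht ht0)).add
    ((ht0.mul (hv.norm.pow 2)).const_mul K)
  have := ge_of_tendsto lim key
  rw [hG'] at this
  rw [WithLp.prod_inner_apply]
  simp [pl2] at this ⊢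
  linarith

end Helpers

section Main

variable {n l : ℕ}

/-- One-step penalization. -/
lemma aux_step (f : Eu n → ℝ) (hf : ContDiff ℝ 1 f) (F : Eu n → Eu l)
    (hLip : LocallyLipschitz F) (Γ : Set (Eu l)) (hΓcl : IsClosed Γ)
    (x z : Eu n) (r t s : ℝ) (ht : 0 < t) (hs : 0 < s)
    (hmin : ∀ y ∈ closedBall x r, F y ∈ Γ → f x ≤ f y)
    (hz : F z ∈ Γ) (hzr : ‖z - x‖ + s * t < r)
    (hfz : f z - f x ≤ s ^ 2 / 4 * t) :
    ∃ (x' : Eu n) (lam δ : Eu l) (ε : Eu n),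
      ε - gradient f x' ∈ scalSubdiff F lam x' ∧ lam ∈ limNormal Γ (F x' - δ) ∧
      ‖x' - z‖ ≤ s * t ∧ ‖δ‖ ≤ s * t ∧ ‖ε‖ ≤ s ∧ ‖δ‖ • lam = ‖lam‖ • δ ∧
      ‖δ‖ * ‖lam‖ ≤ s ^ 2 * t := by
  have hFc : Continuous F := hLip.continuous
  have hfc : Continuous f := hf.continuous
  have hne : Γ.Nonempty := ⟨_, hz⟩
  have hst : 0 < s * t := mul_pos hs ht
  have hη : 0 < s ^ 2 / 4 * t := by positivity
  have hB : IsCompact (closedBall x r) := isCompact_closedBall x r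
  have hzB : z ∈ closedBall x r := by
    rw [mem_closedBall, dist_eq_norm]; linarith
  have hDc : Continuous (fun y => infDist (F y) Γ) := (continuous_infDist_pt Γ).comp hFc
  obtain ⟨δ0, hδ0, hδ⟩ : ∃ δ0 > 0, ∀ y ∈ closedBall x r, infDist (F y) Γ < δ0 →
      f x - s ^ 2 / 4 * t ≤ f y := by
    have hK : IsCompact (closedBall x r ∩ {y | f y ≤ f x - s ^ 2 / 4 * t}) :=
      hB.inter_right (isClosed_le hfc continuous_const)
    rcases Set.eq_empty_or_nonempty (closedBall x r ∩ {y | f y ≤ f x - s ^ 2 / 4 * t}) with h | h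
    · refine ⟨1, one_pos, fun y hy _ => ?_⟩
      by_contra! hc
      have : y ∈ closedBall x r ∩ {y | f y ≤ f x - s ^ 2 / 4 * t} := ⟨hy, hc.le⟩
      rw [h] at this
      exact this
    · obtain ⟨y0, hy0, hy0m⟩ := hK.exists_isMinOn h hDc.continuousOn
      refine ⟨infDist (F y0) Γ, ?_, fun y hy hlt => ?_⟩
      · rcases (infDist_nonneg (x := F y0) (s := Γ)).lt_or_eq with h1 | h1
        · exact h1
        · have h2 : F y0 ∈ Γ := (hΓcl.mem_iff_infDist_zero hne).2 h1.symm
          have h3 := hmin _ hy0.1 h2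
          have h4 : f y0 ≤ f x - s ^ 2 / 4 * t := hy0.2
          linarith
      · by_contra! hc
        have h5 : infDist (F y0) Γ ≤ infDist (F y) Γ := hy0m ⟨hy, hc.le⟩
        linarith
  obtain ⟨b, hb, hbm⟩ := hB.exists_isMinOn ⟨z, hzB⟩ hfc.continuousOn
  have hfb : ∀ y ∈ closedBall x r, f b ≤ f y := fun y hy => hbm hy
  set m := min δ0 (s * t) with hm
  have hm0 : 0 < m := lt_min hδ0 hst
  set ρ : ℝ := 2 * (f z - f b + 1) / m ^ 2 with hρ
  have hfzb := hfb z hzB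
  have hρ0 : 0 < ρ := by rw [hρ]; apply div_pos <;> [linarith; positivity]
  have hρm : ρ / 2 * m ^ 2 = f z - f b + 1 := by rw [hρ]; field_simp
  obtain ⟨x', hx'B, hx'm⟩ := hB.exists_isMinOn ⟨z, hzB⟩
    (f := fun y => f y + ρ / 2 * infDist (F y) Γ ^ 2 + t⁻¹ / 2 * ‖y - z‖ ^ 2)
    (by apply Continuous.continuousOn; fun_prop)
  obtain ⟨y, hyΓ, hyd⟩ := hΓcl.exists_infDist_eq_dist hne (F x')
  rw [dist_eq_norm] at hyd
  have hmn : ∀ u ∈ closedBall x r, f x' + ρ / 2 * ‖F x' - y‖ ^ 2 + t⁻¹ / 2 * ‖x' - z‖ ^ 2 ≤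
      f u + ρ / 2 * infDist (F u) Γ ^ 2 + t⁻¹ / 2 * ‖u - z‖ ^ 2 := by
    intro u hu
    have := hx'm hu
    simp only [mem_ofPred_eq] at this
    rwa [hyd] at this
  have h0 := hmn z hzB
  rw [infDist_zero_of_mem hz, sub_self, norm_zero] at h0
  have hti : 0 < t⁻¹ := inv_pos.2 ht
  have hq : 0 ≤ t⁻¹ / 2 * ‖x' - z‖ ^ 2 := by positivity
  have hdm : ‖F x' - y‖ < m := by
    have h1 := hfb x' hx'B
    have h2 : ρ / 2 * ‖F x' - y‖ ^ 2 < ρ / 2 * m ^ 2 := by rw [hρm]; linarith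
    have h3 := lt_of_mul_lt_mul_left h2 (by positivity)
    exact lt_of_pow_lt_pow_left₀ 2 hm0.le h3
  have hfx' : f x - s ^ 2 / 4 * t ≤ f x' :=
    hδ x' hx'B (by rw [hyd]; exact hdm.trans_le (min_le_left _ _))
  have hp : 0 ≤ ρ / 2 * ‖F x' - y‖ ^ 2 := by positivity
  have hxz : ‖x' - z‖ ≤ s * t := by
    have h1 : t⁻¹ / 2 * ‖x' - z‖ ^ 2 ≤ s ^ 2 / 2 * t := by linarith
    have h2 : ‖x' - z‖ ^ 2 ≤ (s * t) ^ 2 := by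
      calc ‖x' - z‖ ^ 2 = 2 * t * (t⁻¹ / 2 * ‖x' - z‖ ^ 2) := by field_simp
        _ ≤ 2 * t * (s ^ 2 / 2 * t) := by gcongr
        _ = (s * t) ^ 2 := by ring
    exact le_of_sq_le_sq h2 hst.le
  refine ⟨x', ρ • (F x' - y), F x' - y, -(t⁻¹ • (x' - z)), ?_, ?_, hxz,
    (hdm.trans_le (min_le_right _ _)).le, ?_, ?_, ?_⟩
  · -- stationarity
    have hgf : HasFDerivAt f (fderiv ℝ f x') x' :=
      (hf.differentiable one_ne_zero x').hasFDerivAt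
    have hgn : HasFDerivAt (fun u => ‖u - z‖ ^ 2)
        (2 • (innerSL ℝ (x' - z)).comp (ContinuousLinearMap.id ℝ (Eu n))) x' :=
      ((hasFDerivAt_id x').sub_const z).norm_sq
    have hG := hgf.add (hgn.const_mul (t⁻¹ / 2))
    obtain ⟨K, U, hU, hKU⟩ := hLip x'
    refine aux_subdiff (K := ρ / 2 * K ^ 2) hG ?_ ?_
    · intro v
      have : ⟪v, gradient f x'⟫ = fderiv ℝ f x' v := by
        rw [real_inner_comm, gradient, InnerProductSpace.toDual_symm_apply]
      rw [inner_sub_right, this, inner_neg_right, inner_smul_right, real_inner_comm]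
      simp [inner_sub_left]
      ring
    · have hnb : closedBall x r ∈ 𝓝 x' := by
        apply closedBall_mem_nhds_of_mem
        rw [mem_ball, dist_eq_norm]
        calc ‖x' - x‖ = ‖(x' - z) + (z - x)‖ := by congr 1; abel
          _ ≤ ‖x' - z‖ + ‖z - x‖ := norm_add_le _ _
          _ < r := by linarith
      filter_upwards [hU, hnb] with u hu hub
      have h1 := hmn u hub
      have h2 : infDist (F u) Γ ≤ ‖F u - y‖ := by
        rw [← dist_eq_norm]; exact infDist_le_dist_of_mem hyΓ
      have h3 : infDist (F u) Γ ^ 2 ≤ ‖F u - y‖ ^ 2 := by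
        gcongr; exact infDist_nonneg
      have h4 : ‖F u - F x'‖ ≤ K * ‖u - x'‖ := by
        have := hKU.dist_le_mul u hu x' (mem_of_mem_nhds hU)
        rwa [dist_eq_norm, dist_eq_norm] at this
      have h5 : ‖F u - F x'‖ ^ 2 ≤ (K * ‖u - x'‖) ^ 2 := by gcongr
      have h6 : ‖F u - y‖ ^ 2 = ‖F x' - y‖ ^ 2 + 2 * ⟪F x' - y, F u - F x'⟫
          + ‖F u - F x'‖ ^ 2 := by
        rw [← norm_add_sq_real]; congr 2; abel
      have h7 : ⟪F x' - y, F u - F x'⟫ = ⟪F x' - y, F u⟫ - ⟪F x' - y, F x'⟫ :=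
        inner_sub_right _ _ _
      have h8 : ρ / 2 * infDist (F u) Γ ^ 2 ≤ ρ / 2 * (‖F x' - y‖ ^ 2 +
          2 * (⟪F x' - y, F u⟫ - ⟪F x' - y, F x'⟫) + (K * ‖u - x'‖) ^ 2) := by
        gcongr; rw [← h7]; linarith
      simp only [real_inner_smul_left, Pi.add_apply]
      nlinarith
  · rw [sub_sub_cancel]
    refine aux_proj_normal hρ0.le hyΓ fun y' hy' => ?_
    rw [← hyd, ← dist_eq_norm]
    exact infDist_le_dist_of_mem hy'
  · rw [norm_neg, norm_smul, Real.norm_of_nonneg hti.le]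
    calc t⁻¹ * ‖x' - z‖ ≤ t⁻¹ * (s * t) := by gcongr
      _ = s := by field_simp
  · rw [norm_smul, Real.norm_of_nonneg hρ0.le, smul_smul, mul_comm]
  · rw [norm_smul, Real.norm_of_nonneg hρ0.le]
    nlinarith

lemma aux_eps (f : Eu n → ℝ) (hf : ContDiff ℝ 1 f) (F : Eu n → Eu l)
    (hLip : LocallyLipschitz F) (Γ : Set (Eu l)) (hΓcl : IsClosed Γ)
    (x d : Eu n) (hmin : IsLocalMinOn f (F ⁻¹' Γ) x)
    (hd : d ∈ tanCone (F ⁻¹' Γ) x) (hgd : ⟪gradient f x, d⟫ ≤ 0) (hd1 : ‖d‖ = 1)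
    (e : ℝ) (he : 0 < e) :
    ∃ (x' : Eu n) (lam δ : Eu l) (ε : Eu n),
      ε - gradient f x' ∈ scalSubdiff F lam x' ∧ lam ∈ limNormal Γ (F x' - δ) ∧
      x' ≠ x ∧ ‖x' - x‖ ≤ e ∧ ‖‖x' - x‖⁻¹ • (x' - x) - d‖ ≤ e ∧
      ‖δ‖ ≤ e * ‖x' - x‖ ∧ ‖ε‖ ≤ e ∧ ‖δ‖ • lam = ‖lam‖ • δ ∧
      ‖δ‖ * ‖lam‖ ≤ ‖x' - x‖ := by
  obtain ⟨-, dk, tk, hdk, htk, htk0, hmem⟩ := hd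
  obtain ⟨r, hr, hrm⟩ : ∃ r > 0, ∀ y ∈ closedBall x r, F y ∈ Γ → f x ≤ f y := by
    have h1 : ∀ᶠ y in 𝓝 x, y ∈ F ⁻¹' Γ → f x ≤ f y := eventually_nhdsWithin_iff.1 hmin
    obtain ⟨r, hr, h⟩ := nhds_basis_closedBall.eventually_iff.1 h1
    exact ⟨r, hr, fun y hy hF => h hy hF⟩
  set s := min e 1 / 8 with hs
  have hs0 : 0 < s := by rw [hs]; have := lt_min he one_pos; linarith
  have hse : s ≤ e / 8 := by rw [hs]; have := min_le_left e 1; linarith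
  have hs1 : s ≤ 1 / 8 := by rw [hs]; have := min_le_right e 1; linarith
  have hgf : HasFDerivAt f (fderiv ℝ f x) x := (hf.differentiable one_ne_zero x).hasFDerivAt
  have hfd : fderiv ℝ f x d ≤ 0 := by
    rwa [gradient, InnerProductSpace.toDual_symm_apply] at hgd
  have hlim := aux_deriv_seq hgf hdk htk htk0
  have E1 : ∀ᶠ k in atTop, (tk k)⁻¹ * (f (x + tk k • dk k) - f x) < s ^ 2 / 4 :=
    hlim.eventually_lt_const (hfd.trans_lt (by positivity))
  have E2 : ∀ᶠ k in atTop, ‖dk k - d‖ < s := by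
    have := (tendsto_iff_norm_sub_tendsto_zero.1 hdk)
    exact this.eventually_lt_const hs0
  have E3 : ∀ᶠ k in atTop, tk k < min (r / 4) (e / 4) :=
    htk0.eventually_lt_const (by positivity)
  obtain ⟨k, h1, h2, h3⟩ := (E1.and (E2.and E3)).exists
  have ht := htk k
  have h3r : tk k < r / 4 := h3.trans_le (min_le_left _ _)
  have h3e : tk k < e / 4 := h3.trans_le (min_le_right _ _)
  have hF := hmem k
  generalize tk k = t at *
  generalize dk k = w at *
  have hw : ‖w‖ ≤ 1 + s := by
    have := norm_add_le (w - d) d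
    rw [sub_add_cancel, hd1] at this; linarith
  obtain ⟨x', lam, δ, ε, a1, a2, a3, a4, a5, a6, a7⟩ := aux_step f hf F hLip Γ hΓcl x
    (x + t • w) r t s ht hs0 hrm hF
    (by rw [add_sub_cancel_left, norm_smul, Real.norm_of_nonneg ht.le]; nlinarith)
    (by
      have : f (x + t • w) - f x = t * (t⁻¹ * (f (x + t • w) - f x)) := by field_simp
      rw [this, mul_comm]; gcongr)
  have b1 : ‖(x' - x) - t • d‖ ≤ 2 * s * t := by
    have : (x' - x) - t • d = (x' - (x + t • w)) + t • (w - d) := by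
      rw [smul_sub]; abel
    rw [this]
    refine (norm_add_le _ _).trans ?_
    rw [norm_smul, Real.norm_of_nonneg ht.le]
    nlinarith
  have btd : ‖t • d‖ = t := by rw [norm_smul, hd1, Real.norm_of_nonneg ht.le, mul_one]
  have b2 : |‖x' - x‖ - t| ≤ 2 * s * t := by
    have := abs_norm_sub_norm_le (x' - x) (t • d)
    rw [btd] at this; linarith
  obtain ⟨b3, b4⟩ := abs_le.1 b2
  have b5 : t ≤ 2 * ‖x' - x‖ := by nlinarith
  have b6 : ‖x' - x‖ ≤ 2 * t := by nlinarith
  have b7 : 0 < ‖x' - x‖ := by linarith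
  refine ⟨x', lam, δ, ε, a1, a2, ?_, by linarith, ?_, ?_, by linarith, a6, ?_⟩
  · intro h; rw [h, sub_self, norm_zero] at b7; exact lt_irrefl _ b7
  · have c1 : ‖(x' - x) - ‖x' - x‖ • d‖ ≤ 4 * s * t := by
      have : (x' - x) - ‖x' - x‖ • d = ((x' - x) - t • d) + (t - ‖x' - x‖) • d := by
        rw [sub_smul]; abel
      rw [this]
      refine (norm_add_le _ _).trans ?_
      rw [norm_smul, hd1, mul_one, Real.norm_eq_abs, abs_sub_comm]
      linarith
    have c2 : ‖x' - x‖⁻¹ • (x' - x) - d = ‖x' - x‖⁻¹ • ((x' - x) - ‖x' - x‖ • d) := by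
      rw [smul_sub _ (x' - x) (‖x' - x‖ • d), smul_smul, inv_mul_cancel₀ b7.ne', one_smul]
    rw [c2, norm_smul, norm_inv, norm_norm, inv_mul_le_iff₀ b7]
    nlinarith
  · nlinarith
  · nlinarith

end Main

/-- Under GACQ, a local minimizer is AM-stationary in every explicit critical unit
direction. -/
theorem stmt14 {n l : ℕ}
    (f : Eu n → ℝ) (hf : ContDiff ℝ 1 f)
    (F : Eu n → Eu l) (F' : Eu n → Eu n → Eu l)
    (hLip : LocallyLipschitz F) (hF' : IsDirDeriv F F')
    (Γ : Set (Eu l)) (hΓne : Γ.Nonempty) (hΓcl : IsClosed Γ)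
    (x : Eu n) (hfeas : F x ∈ Γ) (hmin : IsLocalMinOn f (F ⁻¹' Γ) x)
    (hGACQ : tanCone (F ⁻¹' Γ) x = linCone F F' Γ x) :
    ∀ d ∈ critCone f F F' Γ x, ‖d‖ = 1 → AMStatDir f F Γ x d := by
  rintro d ⟨hgd, hdl⟩ hd1
  rw [← hGACQ] at hdl
  have key := fun m : ℕ => aux_eps f hf F hLip Γ hΓcl x d hmin hdl hgd hd1
    (1 / ((m : ℝ) + 1)) (by positivity)
  have hlim := tendsto_one_div_add_atTop_nhds_zero_nat (𝕜 := ℝ)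
  choose xk lamk δk εk h1 h2 h3 h4 h5 h6 h7 h8 h9 using key
  have hpos : ∀ k, 0 < ‖xk k - x‖ := fun k => norm_pos_iff.2 (sub_ne_zero.2 (h3 k))
  have hδ : Tendsto (fun k => ‖xk k - x‖⁻¹ • δk k) atTop (𝓝 (0 : Eu l)) := by
    refine squeeze_zero_norm (fun k => ?_) hlim
    rw [norm_smul, norm_inv, norm_norm, inv_mul_le_iff₀ (hpos k), mul_comm]
    exact h6 k
  have hx : Tendsto xk atTop (𝓝 x) :=
    tendsto_iff_norm_sub_tendsto_zero.2 (squeeze_zero (fun _ => norm_nonneg _) h4 hlim)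
  have hx0 : Tendsto (fun k => ‖xk k - x‖) atTop (𝓝 0) := tendsto_iff_norm_sub_tendsto_zero.1 hx
  refine ⟨xk, lamk, δk, εk, ⟨h1, h2, hx, ?_, squeeze_zero_norm h7 hlim⟩, h3, ?_, hδ,
    ⟨fun _ => 0, fun _ => le_rfl, tendsto_const_nhds, fun k => ?_⟩, 1, fun k => ?_⟩
  · have := hlim.mul hx0
    rw [zero_mul] at this
    exact squeeze_zero_norm h6 this
  · exact tendsto_iff_norm_sub_tendsto_zero.2 (squeeze_zero (fun _ => norm_nonneg _) h5 hlim)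
  · rw [h8 k, sub_self, norm_zero, mul_zero]
  · rw [div_le_one (hpos k)]
    exact h9 k

end
end
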